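/- arXiv:1708.03495 — 16 statements merged into one kernel-verified Lean document; each statement's English description precedes it below -/
import Mathlib

section
/- Let F be a field, ε ∈ {1,−1}, and B₁,…,B_m ∈ M(n,F). If there exist A, D ∈ GL(n,F) such that (A*B_i*D)ᵀ = ε•(A*B_i*D) for all i, then the dimension of ⋂_i ker(B_i) (the common kernel, where B_i acts on Fⁿ by v ↦ B_i v) plus the dimension of the span of ⋃_i range(B_i) (the joint column space) equals n. -/
open Matrix

/-- The dual annihilator of the joint column space of a family of matrices is the common kernel of
the transposes, under the identification of vectors with functionals given by the dot product. -/
theorem Matrix.dotProductEquiv_mem_dualAnnihilator_iSup_range_iff {F ι n : Type*} [Field F]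
    [Fintype n] [DecidableEq n] (B : ι → Matrix n n F) (w : n → F) :
    dotProductEquiv F n w ∈ (⨆ i, LinearMap.range (B i).mulVecLin).dualAnnihilator ↔
      ∀ i, (B i)ᵀ *ᵥ w = 0 := by
  simp only [Submodule.dualAnnihilator_iSup_eq, Submodule.mem_iInf,
    Submodule.mem_dualAnnihilator, LinearMap.mem_range, forall_exists_index,
    forall_apply_eq_imp_iff, mulVecLin_apply, dotProductEquiv_apply_apply, dotProduct_mulVec,
    mulVec_transpose, dotProduct_eq_zero_iff]

/-- If `(A * B * D)ᵀ = ε • (A * B * D)` with `A`, `D` and `ε` invertible, then `Aᵀ * D⁻¹` maps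
the kernel of `B` onto that of `Bᵀ`. -/
theorem Matrix.transpose_mulVec_eq_zero_iff_of_transpose_eq_smul {F n : Type*} [Field F]
    [Fintype n] [DecidableEq n] {ε : F} (hε : ε ≠ 0) {A B D : Matrix n n F} (hA : IsUnit A)
    (hD : IsUnit D) (h : (A * B * D)ᵀ = ε • (A * B * D)) (v : n → F) :
    Bᵀ *ᵥ ((Aᵀ * D⁻¹) *ᵥ v) = 0 ↔ B *ᵥ v = 0 := by
  have hDt : IsUnit Dᵀ := (isUnit_transpose D).2 hD
  have key : Dᵀ * (Bᵀ * (Aᵀ * D⁻¹)) = ε • (A * B) := by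
    rw [transpose_mul, transpose_mul] at h
    calc Dᵀ * (Bᵀ * (Aᵀ * D⁻¹)) = (Dᵀ * (Bᵀ * Aᵀ)) * D⁻¹ := by simp only [Matrix.mul_assoc]
      _ = ε • (A * B) := by
        rw [h, smul_mul_assoc, mul_nonsing_inv_cancel_right _ _ ((isUnit_iff_isUnit_det D).1 hD)]
  have cancel {M : Matrix n n F} (hM : IsUnit M) (u : n → F) : M *ᵥ u = 0 ↔ u = 0 :=
    (mulVec_injective_of_isUnit hM).eq_iff' (mulVec_zero M)
  rw [← cancel hDt, mulVec_mulVec, mulVec_mulVec, Matrix.mul_assoc, key, smul_mulVec, smul_eq_zero_iff_right hε,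
    ← mulVec_mulVec, cancel hA]

/-- If a tuple of matrices is ε-symmetrizable, then the dimension of the common
kernel plus the dimension of the joint column space equals n. -/
theorem stmt_2 {F : Type*} [Field F] (ε : F) (hε : ε = 1 ∨ ε = -1) (n m : ℕ)
    (B : Fin m → Matrix (Fin n) (Fin n) F)
    (h : ∃ A D : Matrix (Fin n) (Fin n) F, IsUnit A ∧ IsUnit D ∧
        ∀ i, (A * B i * D)ᵀ = ε • (A * B i * D)) :
    Module.finrank F ↥(⨅ i, LinearMap.ker (B i).mulVecLin) +
      Module.finrank F ↥(⨆ i, LinearMap.range (B i).mulVecLin) = n := by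
  obtain ⟨A, D, hA, hD, hB⟩ := h
  have hε0 : ε ≠ 0 := by rcases hε with rfl | rfl <;> simp
  have hM : IsUnit (Aᵀ * D⁻¹) := ((isUnit_transpose A).2 hA).mul (isUnit_nonsing_inv_iff.2 hD)
  let e : (Fin n → F) ≃ₗ[F] Module.Dual F (Fin n → F) :=
    (LinearEquiv.ofInjectiveEndo (Aᵀ * D⁻¹).mulVecLin (mulVec_injective_of_isUnit hM)).trans
      (dotProductEquiv F (Fin n))
  have hK : (⨅ i, LinearMap.ker (B i).mulVecLin) =
      (⨆ i, LinearMap.range (B i).mulVecLin).dualAnnihilator.comap e.toLinearMap := by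
    ext v
    have he : e v = dotProductEquiv F (Fin n) ((Aᵀ * D⁻¹) *ᵥ v) := rfl
    rw [Submodule.mem_comap, LinearEquiv.coe_coe, he,
      dotProductEquiv_mem_dualAnnihilator_iSup_range_iff]
    simp only [transpose_mulVec_eq_zero_iff_of_transpose_eq_smul hε0 hA hD (hB _),
      Submodule.mem_iInf, LinearMap.mem_ker, mulVecLin_apply]
  have hrank := Subspace.finrank_add_finrank_dualAnnihilator_eq
    (⨆ i, LinearMap.range (B i).mulVecLin)
  rw [Module.finrank_fin_fun] at hrank
  rw [hK, (e.ofSubmodule' _).finrank_eq, add_comm, hrank]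
end

section
/- Let F be a field with char F ≠ 2, let n ≥ 1, and let C₁,…,C_n ∈ M(n,F) be skew-symmetric matrices (C_iᵀ = −C_i). Then for every vector v ∈ Fⁿ, the n×n matrix M whose i-th column is C_i·v (i.e., M_{j,i} = (C_i v)_j) has determinant 0. -/
open Matrix

/-- The quadratic form of a skew-symmetric matrix vanishes when `2 ≠ 0`. -/
theorem dotProduct_mulVec_self_eq_zero_of_transpose_eq_neg {F ι : Type*} [Field F] [Fintype ι]
    (h2 : (2 : F) ≠ 0) {A : Matrix ι ι F} (hA : Aᵀ = -A) (v : ι → F) :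
    v ⬝ᵥ A *ᵥ v = 0 := by
  have h : v ⬝ᵥ A *ᵥ v = -(v ⬝ᵥ A *ᵥ v) := by
    conv_lhs => rw [dotProduct_mulVec, ← mulVec_transpose, hA, neg_mulVec, neg_dotProduct,
      dotProduct_comm]
  have h' : 2 * (v ⬝ᵥ A *ᵥ v) = 0 := by linear_combination h
  exact (mul_eq_zero.mp h').resolve_left h2

/-- Every member of a skew-symmetric induced matrix space is singular: if
C₁, …, C_n are skew-symmetric n×n matrices, then for each vector v the matrix
with columns C₁v, …, C_nv has determinant 0. -/
theorem stmt_3 {F : Type*} [Field F] (h2 : (2 : F) ≠ 0) (n : ℕ) (hn : 1 ≤ n)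
    (C : Fin n → Matrix (Fin n) (Fin n) F) (hC : ∀ i, (C i)ᵀ = -(C i))
    (v : Fin n → F) :
    (Matrix.of fun j i => (C i).mulVec v j).det = 0 := by
  by_cases hv : v = 0
  · subst hv
    exact det_eq_zero_of_row_eq_zero ⟨0, hn⟩ fun i => by simp
  · refine exists_vecMul_eq_zero_iff.mp ⟨v, hv, funext fun i => ?_⟩
    exact dotProduct_mulVec_self_eq_zero_of_transpose_eq_neg h2 (hC i) v
end

section
/- Let F be a field and B₁,…,B_m, C₁,…,C_m ∈ M(n,F). Define 2n×2n block matrices B'₀ = [[I_n, 0],[0, 0]], B'_i = [[0, B_i],[0, 0]] for i ∈ [m], and similarly C'₀ = [[I_n, 0],[0, 0]], C'_i = [[0, C_i],[0, 0]]. Then there exist A, D ∈ GL(n,F) with A*B_i = C_i*D for all i ∈ [m], if and only if there exists E ∈ GL(2n,F) with E*B'₀ = C'₀*E and E*B'_i = C'_i*E for all i ∈ [m]. -/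
open Matrix

/-- Reduction of the equivalence problem for matrix tuples to the conjugacy
(module isomorphism) problem, via 2×2 block matrices. -/
theorem stmt_4 {F : Type*} [Field F] (n m : ℕ)
    (B C : Fin m → Matrix (Fin n) (Fin n) F) :
    (∃ A D : Matrix (Fin n) (Fin n) F, IsUnit A ∧ IsUnit D ∧
        ∀ i, A * B i = C i * D) ↔
      (∃ E : Matrix (Fin n ⊕ Fin n) (Fin n ⊕ Fin n) F, IsUnit E ∧
        E * Matrix.fromBlocks 1 0 0 0 = Matrix.fromBlocks 1 0 0 0 * E ∧
        ∀ i, E * Matrix.fromBlocks 0 (B i) 0 0 =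
          Matrix.fromBlocks 0 (C i) 0 0 * E) := by
  constructor
  · rintro ⟨A, D, hA, hD, h⟩
    refine ⟨fromBlocks A 0 0 D, isUnit_fromBlocks_zero₂₁.2 ⟨hA, hD⟩, ?_, fun i => ?_⟩
    · simp [fromBlocks_multiply]
    · simp [fromBlocks_multiply, h i]
  · rintro ⟨E, hE, h₀, h⟩
    obtain ⟨A, X, Y, D, rfl⟩ : ∃ A X Y D, E = fromBlocks A X Y D :=
      ⟨_, _, _, _, (fromBlocks_toBlocks E).symm⟩
    simp only [fromBlocks_multiply, fromBlocks_inj, mul_one, one_mul, mul_zero, zero_mul,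
      add_zero, zero_add, true_and, and_true] at h₀ h
    obtain ⟨-, rfl⟩ := h₀
    obtain ⟨hA, hD⟩ := isUnit_fromBlocks_zero₂₁.1 hE
    exact ⟨A, D, hA, hD, fun i => (h i).2.1⟩
end

section
/- Let F be a field, ε ∈ {1,−1}, and let B₁,…,B_m, C₁,…,C_m ∈ M(n,F) satisfy B_iᵀ = ε•B_i and C_iᵀ = ε•C_i for all i. Suppose A, D ∈ GL(n,F) satisfy Aᵀ*B_i = C_i*D for all i. Then the matrix E = A⁻¹*D⁻¹ satisfies Eᵀ*C_i = C_i*E for all i (i.e., E is a *-symmetric element of the adjoint algebra of the tuple C). -/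
open Matrix

/-- If A, D witness a twisted equivalence between ε-symmetric tuples B and C,
then E = A⁻¹D⁻¹ is a *-symmetric element of the adjoint algebra of C. -/
theorem stmt_5 {F : Type*} [Field F] (ε : F) (hε : ε = 1 ∨ ε = -1) (n m : ℕ)
    (B C : Fin m → Matrix (Fin n) (Fin n) F)
    (hB : ∀ i, (B i)ᵀ = ε • B i) (hC : ∀ i, (C i)ᵀ = ε • C i)
    (A D : Matrix (Fin n) (Fin n) F) (hA : IsUnit A) (hD : IsUnit D)
    (hAD : ∀ i, Aᵀ * B i = C i * D) :
    ∀ i, (A⁻¹ * D⁻¹)ᵀ * C i = C i * (A⁻¹ * D⁻¹) := by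
  intro i
  have hε0 : ε ≠ 0 := by rcases hε with rfl | rfl <;> simp
  have hBA : B i * A = Dᵀ * C i := by
    have h := congrArg transpose (hAD i)
    rw [transpose_mul, transpose_mul, transpose_transpose, hB, hC, Matrix.smul_mul,
      Matrix.mul_smul] at h
    exact smul_right_injective _ hε0 h
  have hG : (D * A)ᵀ * C i = C i * (D * A) := by
    rw [transpose_mul, Matrix.mul_assoc, ← hBA, ← Matrix.mul_assoc, hAD, Matrix.mul_assoc]
  have hdet : IsUnit (D * A).det := (Matrix.isUnit_iff_isUnit_det _).mp (hD.mul hA)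
  rw [← Matrix.mul_inv_rev]
  calc ((D * A)⁻¹)ᵀ * C i
      = ((D * A)⁻¹)ᵀ * (C i * (D * A)) * (D * A)⁻¹ := by
        rw [← Matrix.mul_assoc, Matrix.mul_nonsing_inv_cancel_right _ _ hdet]
    _ = ((D * A) * (D * A)⁻¹)ᵀ * C i * (D * A)⁻¹ := by
        rw [← hG, transpose_mul (D * A) (D * A)⁻¹, Matrix.mul_assoc (((D * A)⁻¹)ᵀ) _ (C i)]
    _ = C i * (D * A)⁻¹ := by
        rw [Matrix.mul_nonsing_inv _ hdet, transpose_one, Matrix.one_mul]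
end

section
/- Let F be a field, ε ∈ {1,−1}, and let B₁,…,B_m, C₁,…,C_m ∈ M(n,F) satisfy B_iᵀ = ε•B_i and C_iᵀ = ε•C_i for all i. Suppose A, D ∈ GL(n,F) satisfy Aᵀ*B_i = C_i*D for all i. Then there exists G ∈ GL(n,F) with Gᵀ*B_i*G = C_i for all i, if and only if there exist matrices X, Y ∈ M(n,F) such that Yᵀ*C_i = C_i*X for all i and Y*X = A⁻¹*D⁻¹. -/
open Matrix

/-- Two twisted-equivalent ε-symmetric tuples are isometric iff the
*-symmetric element E = A⁻¹D⁻¹ of the adjoint algebra of C admits a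
decomposition E = X* X. -/
theorem stmt_6 {F : Type*} [Field F] (ε : F) (hε : ε = 1 ∨ ε = -1) (n m : ℕ)
    (B C : Fin m → Matrix (Fin n) (Fin n) F)
    (hB : ∀ i, (B i)ᵀ = ε • B i) (hC : ∀ i, (C i)ᵀ = ε • C i)
    (A D : Matrix (Fin n) (Fin n) F) (hA : IsUnit A) (hD : IsUnit D)
    (hAD : ∀ i, Aᵀ * B i = C i * D) :
    (∃ G : Matrix (Fin n) (Fin n) F, IsUnit G ∧ ∀ i, Gᵀ * B i * G = C i) ↔
      (∃ X Y : Matrix (Fin n) (Fin n) F,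
        (∀ i, Yᵀ * C i = C i * X) ∧ Y * X = A⁻¹ * D⁻¹) := by
  have hA' := (isUnit_iff_isUnit_det A).mp hA
  have hD' := (isUnit_iff_isUnit_det D).mp hD
  constructor
  · rintro ⟨G, hG, hGB⟩
    have hG' := (isUnit_iff_isUnit_det G).mp hG
    refine ⟨G⁻¹ * D⁻¹, A⁻¹ * G, fun i => ?_, ?_⟩
    · have hB_eq : B i = (A⁻¹)ᵀ * (C i * D) := by
        rw [← hAD, ← Matrix.mul_assoc, ← transpose_mul, mul_nonsing_inv A hA', transpose_one,
          Matrix.one_mul]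
      calc (A⁻¹ * G)ᵀ * C i
          = (A⁻¹ * G)ᵀ * C i * (D * (G * G⁻¹) * D⁻¹) := by
            rw [mul_nonsing_inv G hG', Matrix.mul_one, mul_nonsing_inv D hD', Matrix.mul_one]
        _ = Gᵀ * ((A⁻¹)ᵀ * (C i * D)) * G * (G⁻¹ * D⁻¹) := by
            simp only [transpose_mul, Matrix.mul_assoc]
        _ = C i * (G⁻¹ * D⁻¹) := by rw [← hB_eq, hGB]
    · rw [Matrix.mul_assoc, ← Matrix.mul_assoc G, mul_nonsing_inv G hG', Matrix.one_mul]
  · rintro ⟨X, Y, hYX, hE⟩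
    have hright : (D * A * Y) * X = 1 := by
      rw [Matrix.mul_assoc, hE, Matrix.mul_assoc, ← Matrix.mul_assoc A, mul_nonsing_inv A hA',
        Matrix.one_mul, mul_nonsing_inv D hD']
    have hleft : X * (D * A * Y) = 1 := mul_eq_one_comm.mp hright
    have hY : IsUnit Y :=
      IsUnit.of_mul_eq_one_right (X * D * A) (by simpa only [Matrix.mul_assoc] using hleft)
    refine ⟨A * Y, hA.mul hY, fun i => ?_⟩
    calc (A * Y)ᵀ * B i * (A * Y)
        = Yᵀ * (Aᵀ * B i) * (A * Y) := by simp only [transpose_mul, Matrix.mul_assoc]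
      _ = (Yᵀ * C i) * (D * A * Y) := by simp only [hAD, Matrix.mul_assoc]
      _ = C i := by rw [hYX, Matrix.mul_assoc, hleft, Matrix.mul_one]
end

section
/- Let F be a field, r a natural number, A, B ∈ M(r,F), and let S be a finite subset of F with |S| > r. Suppose there exists a vector v ∈ Fʳ with A·v = 0 but B·v not in the column space (range) of A. Then for all but at most r elements λ ∈ S, the rank of λ•A + B is strictly greater than the rank of A; that is, the set {λ ∈ S : rank(λ•A + B) ≤ rank(A)} has at most r elements. -/
open Matrix

/-- A linearly independent finite family over a field is sent to the standard basis by some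
linear map. -/
lemma LinearIndependent.exists_linearMap_eq_single {F V ι : Type*} [Field F] [AddCommGroup V]
    [Module F V] [Fintype ι] [DecidableEq ι] {u : ι → V} (hu : LinearIndependent F u) :
    ∃ g : V →ₗ[F] (ι → F), ∀ i, g (u i) = Pi.single i 1 := by
  obtain ⟨g, hg⟩ := (Fintype.linearCombination F u).exists_leftInverse_of_injective
    (LinearMap.ker_eq_bot.2 hu.fintypeLinearCombination_injective)
  refine ⟨g, fun i => ?_⟩
  simpa using LinearMap.congr_fun hg (Pi.single i 1)

/-- If `B v` lies outside the image of `A` for some `v ∈ ker A`, then the scalars `l` at which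
`l • A + B` has rank at most that of `A` are roots of a monic polynomial of degree `rank A`. -/
lemma Matrix.exists_monic_isRoot_of_rank_smul_add_le {F m n : Type*} [Field F] [Finite m]
    [Fintype n] (A B : Matrix m n F) {v : n → F} (hv : A *ᵥ v = 0)
    (hBv : B *ᵥ v ∉ LinearMap.range A.mulVecLin) :
    ∃ p : Polynomial F, p.Monic ∧ p.natDegree = A.rank ∧
      ∀ l : F, (l • A + B).rank ≤ A.rank → p.IsRoot l := by
  classical
  let b := Module.finBasis F (LinearMap.range A.mulVecLin)
  choose w hw using fun i => (b i).2
  have hu : LinearIndependent F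
      (Sum.elim (fun i => (b i : m → F)) (fun _ : Unit => B *ᵥ v)) := by
    refine LinearIndependent.sum_type
      (b.linearIndependent.map' (Submodule.subtype _) (Submodule.ker_subtype _)) ?_ ?_
    · refine LinearIndependent.of_subsingleton () fun h0 => hBv ?_
      rw [h0]
      exact zero_mem _
    · rw [Set.range_const, Submodule.disjoint_span_singleton]
      intro hx
      refine absurd (Submodule.span_le.2 ?_ hx) hBv
      rintro _ ⟨i, rfl⟩
      exact (b i).2
  obtain ⟨g, hg⟩ := hu.exists_linearMap_eq_single
  let N : Matrix _ _ F := of fun i j => g (B *ᵥ w j) (Sum.inl i)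
  refine ⟨(-N).charpoly, charpoly_monic _, ?_, fun l hl => ?_⟩
  · rw [charpoly_natDegree_eq_dim, Fintype.card_fin, Matrix.rank]
  let M : Matrix _ _ F := LinearMap.toMatrix' (g ∘ₗ (l • A + B).mulVecLin ∘ₗ
    Fintype.linearCombination F (Sum.elim w (fun _ : Unit => v)))
  have hM : M = fromBlocks (scalar _ l - -N) 0
      (of fun i j => g (B *ᵥ w j) (Sum.inr i)) 1 := by
    have hgw (i) : g (A *ᵥ w i) = Pi.single (Sum.inl i) 1 := by
      rw [← hg, Sum.elim_inl, ← hw, mulVecLin_apply]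
    have hgv : g (B *ᵥ v) = Pi.single (Sum.inr ()) 1 := hg (Sum.inr ())
    ext (i | i) (j | j) <;>
      simp [M, N, LinearMap.toMatrix'_apply, hgw, hgv, hv,
        Pi.single_apply, diagonal_apply]
  rw [Polynomial.IsRoot, eval_charpoly]
  by_contra hdet
  have hrank : M.rank = A.rank + 1 := by
    rw [rank_of_det_ne_zero]
    · simp [Matrix.rank]
    · rwa [hM, det_fromBlocks_zero₁₂, det_one, mul_one]
  have hle : M.rank ≤ (l • A + B).rank := by
    rw [Matrix.rank, ← toLin'_apply' M, toLin'_toMatrix', LinearMap.range_comp]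
    exact (Submodule.finrank_map_le _ _).trans
      (Submodule.finrank_mono (LinearMap.range_comp_le_range _ _))
  omega

/-- Rank-increasing lemma: if B·ker(A) ⊄ im(A), then for all but at most r
elements λ of a finite set S of scalars, rank(λ•A + B) > rank(A). -/
theorem stmt_7 {F : Type*} [Field F] (r : ℕ) (A B : Matrix (Fin r) (Fin r) F)
    (S : Finset F) (hS : r < S.card)
    (h : ∃ v : Fin r → F, A.mulVec v = 0 ∧
      B.mulVec v ∉ LinearMap.range A.mulVecLin) :
    {l : F | l ∈ S ∧ (l • A + B).rank ≤ A.rank}.ncard ≤ r := by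
  classical
  obtain ⟨v, hv, hBv⟩ := h
  obtain ⟨p, hp, hdeg, hroot⟩ := A.exists_monic_isRoot_of_rank_smul_add_le B hv hBv
  calc {l : F | l ∈ S ∧ (l • A + B).rank ≤ A.rank}.ncard
      ≤ (p.roots.toFinset : Set F).ncard := by
        refine Set.ncard_le_ncard (fun l hl => ?_) (Finset.finite_toSet _)
        simpa [hp.ne_zero] using hroot l hl.2
    _ = p.roots.toFinset.card := Set.ncard_coe_finset _
    _ ≤ p.natDegree := (Multiset.toFinset_card_le _).trans p.card_roots'
    _ = A.rank := hdeg
    _ ≤ r := A.rank_le_width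
end

section
/- Let F be a field with char F ≠ 2, and let A be a finite-dimensional unital associative F-algebra equipped with an F-linear involution * (an anti-automorphism of order at most 2 fixing F), such that A is semisimple as a ring. Let a ∈ A be a *-symmetric element (a* = a) that is not a unit. Then there exists a *-symmetric element b ∈ A (b* = b) and an element c ∈ A with a*c = 0 such that b*c does not belong to the right ideal a·A = {a*x : x ∈ A}; in other words, b·Ann_r(a) ⊄ a·A, where Ann_r(a) = {x ∈ A : a*x = 0}. -/
/-- Polynomial expressions in a self-adjoint element are self-adjoint. -/
theorem star_aeval_of_star_eq {F A : Type*} [Field F] [StarRing F] [TrivialStar F]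
    [Ring A] [Algebra F A] [StarRing A] [StarModule F A]
    {a : A} (ha : star a = a) (q : Polynomial F) :
    star (Polynomial.aeval a q) = Polynomial.aeval a q := by
  induction q using Polynomial.induction_on' with
  | add p q hp hq => simp [hp, hq]
  | monomial n r =>
    simp [Polynomial.aeval_monomial, ← Algebra.smul_def, star_smul, ha]

/-- A non-unit which is integral over a field is annihilated by a nonzero polynomial
expression in itself. -/
theorem exists_aeval_ne_zero_mul_eq_zero {F A : Type*} [Field F] [Ring A] [Algebra F A]
    {a : A} (hint : IsIntegral F a) (hna : ¬ IsUnit a) :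
    ∃ q : Polynomial F, Polynomial.aeval a q ≠ 0 ∧ a * Polynomial.aeval a q = 0 := by
  have hdvd : Polynomial.X ∣ minpoly F a := by
    rw [Polynomial.X_dvd_iff]
    by_contra h0
    have h := Polynomial.divX_mul_X_add (minpoly F a)
    have h1 : Polynomial.aeval a (minpoly F a).divX * a
        = -algebraMap F A ((minpoly F a).coeff 0) := by
      rw [eq_neg_iff_add_eq_zero]
      simpa using congrArg (Polynomial.aeval a) h
    have hu : IsUnit (Polynomial.aeval a (minpoly F a).divX * a) := by
      rw [h1]
      exact ((isUnit_iff_ne_zero.mpr h0).map (algebraMap F A)).neg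
    have hc : Commute (Polynomial.aeval a (minpoly F a).divX) a := by
      simpa using (Commute.all (minpoly F a).divX Polynomial.X).map (Polynomial.aeval a)
    exact hna (hc.isUnit_mul_iff.mp hu).2
  obtain ⟨q, hq⟩ := hdvd
  have hmonic : q.Monic :=
    Polynomial.monic_X.of_mul_monic_left (hq ▸ minpoly.monic hint)
  refine ⟨q, minpoly.aeval_ne_zero_of_dvdNotUnit_minpoly hint hmonic
    ⟨hmonic.ne_zero, Polynomial.X, Polynomial.not_isUnit_X, by rw [hq, mul_comm]⟩, ?_⟩
  have h := minpoly.aeval F a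
  rw [hq] at h
  simpa using h

/-- Semisimple rings are von Neumann regular. -/
theorem IsSemisimpleRing.exists_mul_mul_eq {A : Type*} [Ring A] [IsSemisimpleRing A] (s : A) :
    ∃ x : A, s * x * s = s := by
  obtain ⟨e, he, hs⟩ := IsSemisimpleRing.ideal_eq_span_idempotent (Ideal.span {s})
  obtain ⟨x, hx⟩ := Ideal.mem_span_singleton'.mp (hs ▸ Ideal.mem_span_singleton_self e)
  obtain ⟨t, ht⟩ := Ideal.mem_span_singleton'.mp (hs ▸ Ideal.mem_span_singleton_self s)
  refine ⟨x, ?_⟩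
  rw [mul_assoc, hx, ← ht, mul_assoc, he.eq]

/-- Lemma (key): in a finite-dimensional semisimple *-algebra over a field of
characteristic ≠ 2, for every *-symmetric zero divisor a there is a
*-symmetric b with b·Ann_r(a) ⊄ a·A. -/
theorem stmt_8 {F A : Type*} [Field F] [StarRing F] [TrivialStar F]
    (h2 : (2 : F) ≠ 0)
    [Ring A] [Algebra F A] [StarRing A] [StarModule F A]
    [FiniteDimensional F A] [IsSemisimpleRing A]
    (a : A) (ha : star a = a) (hna : ¬ IsUnit a) :
    ∃ b c : A, star b = b ∧ a * c = 0 ∧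
      b * c ∉ Set.range (fun x : A => a * x) := by
  obtain ⟨q, hs0, has⟩ :=
    exists_aeval_ne_zero_mul_eq_zero (Algebra.IsIntegral.isIntegral (R := F) a) hna
  have hss := star_aeval_of_star_eq ha q
  generalize Polynomial.aeval a q = s at hs0 has hss
  have hsa : s * a = 0 := by simpa [ha, hss] using congrArg star has
  obtain ⟨x, hx⟩ := IsSemisimpleRing.exists_mul_mul_eq s
  have hx' : s * star x * s = s := by
    simpa [hss, mul_assoc] using congrArg star hx
  refine ⟨x + star x, s, by simp [add_comm], has, ?_⟩
  rintro ⟨y, hy⟩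
  have h : s * ((x + star x) * s) = 0 := by
    rw [← hy]
    simp [← mul_assoc, hsa]
  have h' : (2 : F) • s = 0 := by
    rw [two_smul, ← h, add_mul, mul_add, ← mul_assoc, ← mul_assoc, hx, hx']
  exact (smul_eq_zero.mp h').elim h2 hs0
end

section
/- Let F be a field with char F ≠ 2, and let A be a finite-dimensional unital associative F-algebra equipped with an F-linear involution * (an anti-automorphism of order at most 2 fixing F). Let a ∈ A be a *-symmetric element (a* = a) such that the right ideal a·A has a left identity element, i.e., there exist e, d ∈ A with e = a*d and e*a = a. Then the right annihilator Ann_r(a) = {x ∈ A : a*x = 0} is generated as a right ideal by a *-symmetric element: there exists b ∈ A with b* = b such that {x ∈ A : a*x = 0} = {b*y : y ∈ A}. -/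
open Polynomial

/-- Semisimple rings are von Neumann regular. -/
theorem IsSemisimpleRing.exists_mul_mul_eq_self {R : Type*} [Ring R] [IsSemisimpleRing R] (z : R) :
    ∃ x : R, z * x * z = z := by
  obtain ⟨C, hC⟩ := exists_isCompl (Ideal.span {z})
  have h1 : (1 : R) ∈ Ideal.span {z} ⊔ C := by rw [hC.sup_eq_top]; trivial
  obtain ⟨s, hs, v, hv, hsv⟩ := Submodule.mem_sup.1 h1
  obtain ⟨x, rfl⟩ := Ideal.mem_span_singleton'.1 hs
  have hzv : z * v = z - z * x * z := by
    rw [eq_sub_of_add_eq' hsv]; noncomm_ring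
  have hz : z * v = 0 := by
    refine (Submodule.disjoint_def.1 hC.disjoint) _ ?_ (C.mul_mem_left z hv)
    rw [hzv]
    exact sub_mem (Ideal.mem_span_singleton_self z)
      (Ideal.mul_mem_left _ _ (Ideal.mem_span_singleton_self z))
  exact ⟨x, (sub_eq_zero.1 (hzv.symm.trans hz)).symm⟩

theorem isNilpotent_mul_swap {R : Type*} [MonoidWithZero R] {x y : R} (h : IsNilpotent (x * y)) :
    IsNilpotent (y * x) := by
  obtain ⟨n, hn⟩ := h
  refine ⟨n + 1, ?_⟩
  have key : ∀ k : ℕ, (y * x) ^ (k + 1) = y * (x * y) ^ k * x := by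
    intro k
    induction k with
    | zero => simp
    | succ k ih => rw [pow_succ, ih, pow_succ]; simp only [mul_assoc]
  rw [key, hn, mul_zero, zero_mul]

theorem isNilpotent_of_mem_jacobson {R : Type*} [Ring R] [IsArtinianRing R] {x : R}
    (hx : x ∈ Ring.jacobson R) : IsNilpotent x := by
  obtain ⟨n, hn⟩ := IsSemiprimaryRing.isNilpotent (R := R)
  refine ⟨n, ?_⟩
  have := Ideal.pow_mem_pow hx n
  rwa [hn] at this

/-- In an Artinian ring the Jacobson radical consists of the elements generating nil left ideals. -/
theorem mem_jacobson_iff_forall_isNilpotent {R : Type*} [Ring R] [IsArtinianRing R] {x : R} :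
    x ∈ Ring.jacobson R ↔ ∀ y, IsNilpotent (y * x) := by
  refine ⟨fun hx y => isNilpotent_of_mem_jacobson (Ideal.mul_mem_left _ _ hx), fun h => ?_⟩
  rw [← Ideal.jacobson_bot, Ideal.mem_jacobson_iff]
  intro y
  obtain ⟨u, hu⟩ := (h y).isUnit_add_one
  refine ⟨↑u⁻¹, ?_⟩
  have : (↑u⁻¹ : R) * (y * x + 1) = 1 := by rw [← hu, Units.inv_mul]
  rw [Ideal.mem_bot, ← sub_eq_zero.2 this]
  noncomm_ring

theorem star_mem_jacobson {R : Type*} [Ring R] [IsArtinianRing R] [StarRing R] {x : R}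
    (hx : x ∈ Ring.jacobson R) : star x ∈ Ring.jacobson R := by
  rw [mem_jacobson_iff_forall_isNilpotent] at hx ⊢
  intro y
  obtain ⟨n, hn⟩ := isNilpotent_mul_swap (hx (star y))
  refine ⟨n, ?_⟩
  simpa using congrArg star hn

/-- Fitting decomposition of an algebraic element by an idempotent polynomial expression. -/
theorem exists_fitting_polynomial (F : Type*) {A : Type*} [Field F] [Ring A] [Algebra F A]
    [FiniteDimensional F A] (q : A) :
    ∃ (P : F[X]) (m : ℕ), IsIdempotentElem (q * aeval q P) ∧ q ^ m * (1 - q * aeval q P) = 0 := by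
  obtain ⟨v, hv, hXv⟩ := exists_eq_pow_rootMultiplicity_mul_and_not_dvd (minpoly F q)
    (minpoly.ne_zero (IsIntegral.of_finite F q)) 0
  set m := rootMultiplicity 0 (minpoly F q)
  rw [C_0, sub_zero] at hv hXv
  obtain ⟨α, β, hαβ⟩ : IsCoprime (X ^ (m + 1)) v :=
    ((Polynomial.irreducible_X.coprime_iff_not_dvd).2 hXv).pow_left
  have hmin : aeval q (X ^ m * v) = 0 := by rw [← hv, minpoly.aeval]
  have hh : q * aeval q (α * X ^ m) = aeval q (α * X ^ (m + 1)) := by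
    rw [show α * X ^ (m + 1) = X * (α * X ^ m) by ring, map_mul (aeval q) X, aeval_X]
  have h1 : 1 - aeval q (α * X ^ (m + 1)) = aeval q (β * v) := by
    rw [sub_eq_iff_eq_add', ← map_add, hαβ, map_one]
  have hz : q ^ m * aeval q (β * v) = 0 := by
    have : X ^ m * (β * v) = β * (X ^ m * v) := by ring
    rw [← aeval_X_pow (R := F) q, ← map_mul, this, map_mul, hmin, mul_zero]
  refine ⟨α * X ^ m, m, ?_, by rw [hh, h1, hz]⟩
  have hz' : aeval q (α * X ^ (m + 1)) * (1 - aeval q (α * X ^ (m + 1))) = 0 := by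
    rw [h1, show α * X ^ (m + 1) = (α * X) * X ^ m by ring, map_mul, aeval_X_pow, mul_assoc, hz,
      mul_zero]
  rw [hh, IsIdempotentElem]
  rw [mul_sub, mul_one, sub_eq_zero] at hz'
  exact hz'.symm

theorem aeval_mul_comm_mul {F A : Type*} [Field F] [Ring A] [Algebra F A] (y z : A) (P : F[X]) :
    aeval (z * y) P * z = z * aeval (y * z) P := by
  induction P using Polynomial.induction_on with
  | C c => simp [Algebra.commutes]
  | add p r hp hr => simp [add_mul, mul_add, hp, hr]
  | monomial n c h =>
    have e : (C c * X ^ (n + 1) : F[X]) = C c * X ^ n * X := by ring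
    rw [e, map_mul (aeval (z * y)) _ X, map_mul (aeval (y * z)) _ X, aeval_X, aeval_X, ← mul_assoc z, ← h]
    simp only [mul_assoc]

section StarAlgebra

variable {F A : Type*} [Field F] [StarRing F] [TrivialStar F] [Ring A] [Algebra F A] [StarRing A]
  [StarModule F A]

theorem star_aeval_of_trivialStar (q : A) (P : F[X]) : star (aeval q P) = aeval (star q) P := by
  induction P using Polynomial.induction_on' with
  | add p r hp hr => simp [hp, hr]
  | monomial n c =>
    rw [aeval_monomial, aeval_monomial, star_mul, star_pow, ← algebraMap_star_comm,
      star_trivial c, Algebra.commutes]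

/-- A non-nilpotent product of symmetric elements `y * z` yields a nonzero regular symmetric element
`y * w * y` with a symmetric inner inverse `w` divisible by `z`. -/
theorem exists_regular_of_not_isNilpotent [FiniteDimensional F A] {y z : A} (hy : star y = y)
    (hz : star z = z) (h : ¬ IsNilpotent (y * z)) :
    ∃ t : A, star (z * t) = z * t ∧ y * (z * t) * y ≠ 0 ∧
      y * (z * t) * y * (z * t) * (y * (z * t) * y) = y * (z * t) * y := by
  obtain ⟨P, m, hid, hm⟩ := exists_fitting_polynomial F (y * z)
  refine ⟨aeval (y * z) P, ?_, ?_, ?_⟩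
  · rw [star_mul, star_aeval_of_trivialStar, star_mul, hy, hz, aeval_mul_comm_mul]
  · intro h0
    apply h
    refine ⟨m, ?_⟩
    have : y * z * aeval (y * z) P = 0 := by
      rw [← hid.eq]
      simp only [← mul_assoc] at h0 ⊢
      rw [h0]; simp
    simpa [this] using hm
  · have h1 := hid.eq
    set w := z * aeval (y * z) P with hw
    rw [mul_assoc y z, ← hw] at h1
    calc y * w * y * w * (y * w * y) = ((y * w) * (y * w)) * (y * w) * y := by noncomm_ring
      _ = y * w * y := by rw [h1, h1]

/-- A symmetric element is invertible, or it is annihilated modulo the radical by a symmetric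
element outside the radical. -/
theorem isUnit_or_exists_annihilating [FiniteDimensional F A] {a : A} (ha : star a = a) :
    (∃ u : A, star u = u ∧ a * u = 1 ∧ u * a = 1) ∨
      ∃ z : A, star z = z ∧ z ∉ Ring.jacobson A ∧ a * z ∈ Ring.jacobson A ∧
        z * a ∈ Ring.jacobson A := by
  classical
  have : IsArtinianRing A := IsArtinianRing.of_finite F A
  obtain ⟨P, m, hid, hm⟩ := exists_fitting_polynomial F a
  have hu : star (aeval a P) = aeval a P := by rw [star_aeval_of_trivialStar, ha]
  have hc : Commute a (aeval a P) := by
    have := aeval_mul_comm_mul (F := F) 1 a P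
    rw [mul_one, one_mul] at this
    exact this.symm
  set u := aeval a P
  set r := 1 - a * u with hr
  have hrs : star r = r := by rw [hr]; simp [ha, hu, hc.eq]
  have har : Commute a r := (Commute.one_right a).sub_right ((Commute.refl a).mul_right hc)
  have hex : ∃ n, a ^ n * r ∈ Ring.jacobson A := ⟨m, by rw [hm]; exact zero_mem _⟩
  rcases hn : Nat.find hex with _ | n
  · left
    have h0 := Nat.find_spec hex
    rw [hn, pow_zero, one_mul] at h0
    obtain ⟨k, hk⟩ := isNilpotent_of_mem_jacobson h0
    have hr0 : r = 0 := by
      have := hid.one_sub.pow_succ_eq k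
      rw [← hr] at this
      rw [← this, pow_succ, hk, zero_mul]
    have h1 : a * u = 1 := (sub_eq_zero.1 hr0).symm
    exact ⟨u, hu, h1, hc.eq ▸ h1⟩
  · right
    have h1 := Nat.find_spec hex
    rw [hn] at h1
    have hcn : Commute (a ^ n) r := har.pow_left n
    refine ⟨a ^ n * r, ?_, Nat.find_min hex (hn ▸ n.lt_succ_self), ?_, ?_⟩
    · rw [star_mul, star_pow, ha, hrs, hcn.eq]
    · rwa [← mul_assoc, ← pow_succ']
    · rwa [mul_assoc, ← har.eq, ← mul_assoc, ← pow_succ]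

/-- A symmetric element has a symmetric inner inverse modulo the radical. -/
theorem exists_symmetric_inner_inverse_mod_jacobson [FiniteDimensional F A] (h2 : (2 : F) ≠ 0)
    {z : A} (hz : star z = z) : ∃ x : A, star x = x ∧ z * x * z - z ∈ Ring.jacobson A := by
  have : IsArtinianRing A := IsArtinianRing.of_finite F A
  obtain ⟨x', hx'⟩ :=
    IsSemisimpleRing.exists_mul_mul_eq_self (Ideal.Quotient.mk (Ring.jacobson A) z)
  obtain ⟨x, rfl⟩ := Ideal.Quotient.mk_surjective x'
  have hx : z * x * z - z ∈ Ring.jacobson A := by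
    rw [← Ideal.Quotient.eq, map_mul, map_mul, hx']
  have hxs := star_mem_jacobson hx
  rw [star_sub, star_mul, star_mul, hz, ← mul_assoc] at hxs
  refine ⟨(2⁻¹ : F) • (x + star x), by simp [add_comm], ?_⟩
  have hsum : z * ((2⁻¹ : F) • (x + star x)) * z - z =
      algebraMap F A 2⁻¹ * ((z * x * z - z) + (z * star x * z - z)) := by
    have h : z = (2⁻¹ : F) • (z + z) := by
      rw [← two_smul F z, smul_smul, inv_mul_cancel₀ h2, one_smul]
    rw [← Algebra.smul_def, mul_smul_comm, smul_mul_assoc]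
    conv_lhs => rw [sub_eq_add_neg]; arg 2; rw [h]
    rw [← smul_neg, ← smul_add]
    congr 1
    noncomm_ring
  rw [hsum]
  exact Ideal.mul_mem_left _ _ (add_mem hx hxs)

/-- A regular symmetric element is invertible or admits a nonzero regular symmetric element
orthogonal to it. -/
theorem isUnit_or_exists_orthogonal [FiniteDimensional F A] (h2 : (2 : F) ≠ 0) {a d : A}
    (ha : star a = a) (hd : star d = d) (had : a * d * a = a) (hda : d * a * d = d) :
    (∃ u : A, star u = u ∧ a * u = 1 ∧ u * a = 1) ∨
      ∃ c w : A, star c = c ∧ star w = w ∧ c ≠ 0 ∧ c * w * c = c ∧ a * w = 0 ∧ d * c = 0 := by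
  refine (isUnit_or_exists_annihilating (F := F) ha).imp_right ?_
  rintro ⟨z, hz, hzJ, haz, hza⟩
  have : IsArtinianRing A := IsArtinianRing.of_finite F A
  obtain ⟨x, hx, hzx⟩ := exists_symmetric_inner_inverse_mod_jacobson h2 hz
  set y := (1 - a * d) * x * (1 - d * a) with hy
  set z' := (1 - d * a) * z * (1 - a * d) with hz'
  have hys : star y = y := by simp [hy, ha, hd, hx, mul_assoc]
  have hzs : star z' = z' := by simp [hz', ha, hd, hz, mul_assoc]
  have hnil : ¬ IsNilpotent (y * z') := by
    intro hn
    obtain ⟨n, hn⟩ := isNilpotent_mul_swap hn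
    set π := Ideal.Quotient.mk (Ring.jacobson A)
    have e1 : π a * π z = 0 := by
      rw [← map_mul]; exact Ideal.Quotient.eq_zero_iff_mem.2 haz
    have e2 : π z * π a = 0 := by
      rw [← map_mul]; exact Ideal.Quotient.eq_zero_iff_mem.2 hza
    have e3 : π z * π x * π z = π z := by
      rw [← map_mul, ← map_mul]; exact Ideal.Quotient.eq.2 hzx
    have ez : π z' = π z := by
      simp only [hz', map_mul, map_sub, sub_mul, mul_sub, one_mul, mul_one, mul_assoc, e1,
        mul_zero, sub_zero]
      rw [← mul_assoc (π z), e2]; simp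
    have key : π (z' * y) * π z = π z := by
      have l : π z * (1 - π a * π d) = π z := by rw [mul_sub, ← mul_assoc, e2]; simp
      have r : (1 - π d * π a) * π z = π z := by rw [sub_mul, mul_assoc, e1]; simp
      rw [map_mul, ez, hy]
      simp only [map_mul, map_sub, map_one]
      rw [← mul_assoc, ← mul_assoc, l, mul_assoc _ _ (π z), r, e3]
    have hpow : ∀ k : ℕ, π (z' * y) ^ k * π z = π z := by
      intro k
      induction k with
      | zero => simp
      | succ k ih => rw [pow_succ, mul_assoc, key, ih]
    have := hpow n
    rw [← map_pow, hn, map_zero, zero_mul] at this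
    exact hzJ (Ideal.Quotient.eq_zero_iff_mem.1 this.symm)
  obtain ⟨t, ht, hne, hreg⟩ := exists_regular_of_not_isNilpotent (F := F) hys hzs hnil
  refine ⟨_, _, ?_, ht, hne, hreg, ?_, ?_⟩
  · rw [star_mul _ y, star_mul y, hys, ht, mul_assoc y]
  · have : a * (1 - d * a) = 0 := by rw [mul_sub, ← mul_assoc, had]; simp
    simp only [hz', ← mul_assoc, this, zero_mul]
  · have : d * (1 - a * d) = 0 := by rw [mul_sub, ← mul_assoc, hda]; simp
    rw [hy]
    simp only [← mul_assoc, this, zero_mul]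

/-- A regular symmetric element has an invertible symmetric inner inverse. -/
theorem exists_symmetric_unit_inner_inverse [FiniteDimensional F A] (h2 : (2 : F) ≠ 0) (a d : A)
    (ha : star a = a) (hd : star d = d) (had : a * d * a = a) :
    ∃ u v : A, star u = u ∧ u * v = 1 ∧ a * u * a = a := by
  induction hR : LinearMap.range (LinearMap.mulLeft F a) using WellFoundedGT.induction
    generalizing a d with
  | ind R ih =>
  wlog hda : d * a * d = d generalizing d
  · refine this (d * a * d) (by simp [ha, hd, mul_assoc]) ?_ ?_
    · calc a * (d * a * d) * a = (a * d * a) * d * a := by noncomm_ring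
        _ = a := by rw [had, had]
    · calc d * a * d * a * (d * a * d) = d * (a * d * a * d * a) * d := by noncomm_ring
        _ = d * a * d := by rw [had, had]
  rcases isUnit_or_exists_orthogonal h2 ha hd had hda with
    ⟨u, hu, hau, hua⟩ | ⟨c, w, hc, hw, hc0, hcw, haw, hdc⟩
  · exact ⟨u, a, hu, hua, by rw [hau, one_mul]⟩
  have hwa : w * a = 0 := by simpa [ha, hw] using congrArg star haw
  have hcd : c * d = 0 := by simpa [hc, hd] using congrArg star hdc
  have hsum : (a + c) * (d + w) * (a + c) = a + c := by
    have : (a + c) * (d + w) = a * d + c * w := by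
      rw [add_mul, mul_add, mul_add, haw, hcd, add_zero, zero_add]
    rw [this, add_mul, mul_add, mul_add, had, hcw, mul_assoc a d c, hdc, mul_assoc c w a, hwa]
    simp
  have hlt : R < LinearMap.range (LinearMap.mulLeft F (a + c)) := by
    rw [← hR]
    refine lt_of_le_of_ne ?_ ?_
    · rintro _ ⟨x, rfl⟩
      refine ⟨d * (a * x), ?_⟩
      simp only [LinearMap.mulLeft_apply]
      rw [add_mul, ← mul_assoc c, hcd, zero_mul, add_zero, ← mul_assoc, ← mul_assoc, had]
    · intro heq
      have hmem : c ∈ LinearMap.range (LinearMap.mulLeft F (a + c)) := by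
        refine ⟨w * c, ?_⟩
        rw [LinearMap.mulLeft_apply, add_mul, ← mul_assoc, haw, ← mul_assoc, hcw]
        simp
      rw [← heq] at hmem
      obtain ⟨x, hx⟩ := hmem
      rw [LinearMap.mulLeft_apply] at hx
      apply hc0
      rw [← hx, ← had, mul_assoc, hx, mul_assoc, hdc, mul_zero]
  obtain ⟨u, v, hu, huv, hau⟩ := ih _ hlt (a + c) (d + w) (by rw [star_add, ha, hc])
    (by rw [star_add, hd, hw]) hsum rfl
  refine ⟨u, v, hu, huv, ?_⟩
  have hl : a * d * (a + c) = a := by rw [mul_add, had, mul_assoc, hdc]; simp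
  have hr : (a + c) * (d * a) = a := by rw [add_mul, ← mul_assoc, had, ← mul_assoc, hcd]; simp
  calc a * u * a = (a * d * (a + c)) * u * ((a + c) * (d * a)) := by rw [hl, hr]
    _ = a * d * ((a + c) * u * (a + c)) * (d * a) := by noncomm_ring
    _ = a := by rw [hau, hl, ← mul_assoc, had]

end StarAlgebra

/-- If a is a *-symmetric element of a finite-dimensional *-algebra over a
field of characteristic ≠ 2 such that the right ideal a·A has a left identity,
then the right annihilator of a is generated as a right ideal by a
*-symmetric element. -/
theorem stmt_9 {F A : Type*} [Field F] [StarRing F] [TrivialStar F]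
    (h2 : (2 : F) ≠ 0)
    [Ring A] [Algebra F A] [StarRing A] [StarModule F A]
    [FiniteDimensional F A]
    (a : A) (ha : star a = a)
    (hid : ∃ e d : A, e = a * d ∧ e * a = a) :
    ∃ b : A, star b = b ∧
      {x : A | a * x = 0} = Set.range (fun y : A => b * y) := by
  obtain ⟨_, d, rfl, had⟩ := hid
  have hsd : a * star d * a = a := by simpa [ha, mul_assoc] using congrArg star had
  obtain ⟨u, v, hu, huv, hau⟩ := exists_symmetric_unit_inner_inverse h2 a
    ((2⁻¹ : F) • (d + star d)) ha (by simp [add_comm]) (by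
      rw [mul_smul_comm, smul_mul_assoc, mul_add, add_mul, had, hsd, ← two_smul F a, smul_smul,
        inv_mul_cancel₀ h2, one_smul])
  refine ⟨u - u * a * u, by simp [hu, ha, mul_assoc], Set.Subset.antisymm ?_ ?_⟩
  · intro x hx
    refine ⟨v * x, ?_⟩
    have hx : a * x = 0 := hx
    calc (u - u * a * u) * (v * x) = (u * v) * x - u * a * (u * v) * x := by noncomm_ring
      _ = x := by rw [huv, mul_one, mul_assoc, hx]; simp
  · rintro _ ⟨y, rfl⟩
    have h0 : a * (u - u * a * u) = 0 := by
      rw [mul_sub, ← mul_assoc, ← mul_assoc, hau, sub_self]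
    change a * ((u - u * a * u) * y) = 0
    rw [← mul_assoc, h0, zero_mul]
end

section
/- Let F be a field, let A be a unital associative F-algebra, and let S ⊆ A be a finite-dimensional non-unital F-subalgebra of A (an F-linear subspace closed under multiplication). Suppose S is not nilpotent, i.e., for every k ≥ 1 there exist elements s₁,…,s_k ∈ S with s₁*s₂*⋯*s_k ≠ 0. Then every subset V ⊆ S whose F-linear span equals S contains a non-nilpotent element: there exists x ∈ V such that xᵏ ≠ 0 for all k ≥ 1. In particular, every F-basis of S contains a non-nilpotent element. -/
open scoped TensorProduct

theorem Ideal.list_prod_mem_pow_length {R : Type*} [Semiring R] {I : Ideal R} [I.IsTwoSided] :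
    ∀ l : List R, (∀ x ∈ l, x ∈ I) → l.prod ∈ I ^ l.length
  | [], _ => by simp [Submodule.pow_zero]
  | a :: l, h => by
    rw [List.prod_cons, List.length_cons, Ideal.IsTwoSided.pow_succ]
    exact Ideal.mul_mem_mul (h a (by simp))
      (Ideal.list_prod_mem_pow_length l fun x hx ↦ h x (by simp [hx]))

/-- The trace vanishes on the span of the nilpotent matrices. -/
theorem Matrix.trace_eq_zero_of_mem_span_isNilpotent {K n : Type*} [Field K] [Fintype n]
    [DecidableEq n] {x : Matrix n n K}
    (hx : x ∈ Submodule.span K {y : Matrix n n K | IsNilpotent y}) : x.trace = 0 := by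
  have hle : Submodule.span K {y : Matrix n n K | IsNilpotent y} ≤
      LinearMap.ker (Matrix.traceLinearMap n K K) :=
    Submodule.span_le.mpr fun _ hy ↦ (Matrix.isNilpotent_trace_of_isNilpotent hy).eq_zero
  exact hle hx

/-- Over an algebraically closed field, an element all of whose left multiples are sums of
nilpotent elements lies in the Jacobson radical. -/
theorem Ring.mem_jacobson_of_forall_mul_mem_span_isNilpotent (K : Type*) {B : Type*} [Field K]
    [IsAlgClosed K] [Ring B] [Algebra K B] [FiniteDimensional K B] {x : B}
    (hx : ∀ b : B, b * x ∈ Submodule.span K {y : B | IsNilpotent y}) : x ∈ Ring.jacobson B := by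
  have : IsArtinianRing B := IsArtinianRing.of_finite K B
  have : FiniteDimensional K (B ⧸ Ring.jacobson B) :=
    Module.Finite.of_surjective (Ideal.Quotient.mkₐ K (Ring.jacobson B)).toLinearMap
      (Ideal.Quotient.mkₐ_surjective K _)
  obtain ⟨n, d, -, ⟨e⟩⟩ := IsSemisimpleRing.exists_algEquiv_pi_matrix_of_isAlgClosed K
    (B ⧸ Ring.jacobson B)
  rw [← Ideal.Quotient.eq_zero_iff_mem, ← e.map_eq_zero_iff]
  funext i
  let φ : B →ₐ[K] Matrix (Fin (d i)) (Fin (d i)) K :=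
    (Pi.evalAlgHom K _ i).comp (e.toAlgHom.comp (Ideal.Quotient.mkₐ K (Ring.jacobson B)))
  have hφ : Function.Surjective φ :=
    (Function.surjective_eval i).comp (e.surjective.comp (Ideal.Quotient.mkₐ_surjective K _))
  change φ x = 0
  refine Matrix.ext_iff_trace_mul_left.mpr fun M ↦ ?_
  obtain ⟨b, rfl⟩ := hφ M
  rw [mul_zero, Matrix.trace_zero, ← map_mul]
  refine Matrix.trace_eq_zero_of_mem_span_isNilpotent ?_
  have hle : Submodule.span K {y : B | IsNilpotent y} ≤
      (Submodule.span K {y | IsNilpotent y}).comap φ.toLinearMap :=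
    Submodule.span_le.mpr fun y hy ↦ Submodule.subset_span (IsNilpotent.map hy φ)
  exact hle (hx b)

/-- **Wedderburn**: a left ideal of a finite-dimensional algebra which is spanned by nilpotent
elements is nilpotent. -/
theorem Ideal.exists_list_prod_eq_zero_of_le_span_isNilpotent {F B : Type*} [Field F] [Ring B]
    [Algebra F B] [FiniteDimensional F B] (I : Ideal B)
    (hI : I.restrictScalars F ≤ Submodule.span F {y : B | IsNilpotent y}) :
    ∃ n : ℕ, ∀ l : List B, (∀ x ∈ l, x ∈ I) → l.length = n → l.prod = 0 := by
  let K := AlgebraicClosure F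
  let ι : B →ₐ[F] K ⊗[F] B := Algebra.TensorProduct.includeRight
  have hι : Function.Injective ι :=
    Algebra.TensorProduct.includeRight_injective (algebraMap F K).injective
  have : IsArtinianRing (K ⊗[F] B) := IsArtinianRing.of_finite K _
  have hspan : ∀ x ∈ I, ι x ∈ Submodule.span K {y : K ⊗[F] B | IsNilpotent y} := by
    have hle : Submodule.span F {y : B | IsNilpotent y} ≤
        ((Submodule.span K {y : K ⊗[F] B | IsNilpotent y}).restrictScalars F).comap
          ι.toLinearMap :=
      Submodule.span_le.mpr fun y hy ↦ Submodule.subset_span (IsNilpotent.map hy ι)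
    exact fun x hx ↦ hle (hI hx)
  have hJ : ∀ x ∈ I, ι x ∈ Ring.jacobson (K ⊗[F] B) := fun x hx ↦ by
    refine Ring.mem_jacobson_of_forall_mul_mem_span_isNilpotent K fun b ↦ ?_
    induction b with
    | zero => simp
    | add b c hb hc => rw [add_mul]; exact add_mem hb hc
    | tmul c b =>
      have h : (c ⊗ₜ[F] b) * ι x = c • ι (b * x) := by
        simp [ι, TensorProduct.smul_tmul']
      rw [h]
      exact Submodule.smul_mem _ _ (hspan _ (I.mul_mem_left b hx))
  obtain ⟨n, hn⟩ := IsSemiprimaryRing.isNilpotent (R := K ⊗[F] B)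
  refine ⟨n, fun l hl hlen ↦ hι ?_⟩
  have hmem := Ideal.list_prod_mem_pow_length (I := Ring.jacobson (K ⊗[F] B)) (l.map ι)
    (by simpa using fun x hx ↦ hJ x (hl x hx))
  rw [List.length_map, hlen, hn] at hmem
  rw [map_list_prod, map_zero]
  exact hmem

/-- Every spanning subset (in particular every basis) of a non-nilpotent
finite-dimensional (non-unital) subalgebra contains a non-nilpotent element. -/
theorem stmt_11 {F A : Type*} [Field F] [Ring A] [Algebra F A]
    (S : Submodule F A) (hmul : ∀ x ∈ S, ∀ y ∈ S, x * y ∈ S)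
    [FiniteDimensional F ↥S]
    (hnonnil : ∀ k : ℕ, 1 ≤ k → ∃ f : Fin k → A,
      (∀ i, f i ∈ S) ∧ (List.ofFn f).prod ≠ 0)
    (V : Set A) (hVS : V ⊆ ↑S) (hspan : Submodule.span F V = S) :
    ∃ x ∈ V, ∀ k : ℕ, 1 ≤ k → x ^ k ≠ 0 := by
  by_contra! hV
  let T : NonUnitalSubalgebra F A := { S with mul_mem' := fun ha hb ↦ hmul _ ha _ hb }
  have hT : FiniteDimensional F T := ‹FiniteDimensional F S›
  have : FiniteDimensional F (Unitization F T) :=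
    Module.Finite.equiv (Unitization.linearEquiv F F T).symm
  let π : Unitization F T →ₐ[F] A := NonUnitalSubalgebra.unitization T
  have hπ (s : T) : π (s : Unitization F T) = s := by simp [π]
  have hinr (x : Unitization F T) (hx : x.fst = 0) : x = (x.snd : Unitization F T) :=
    Unitization.ext hx (by simp)
  have hnil : ∀ a (ha : a ∈ S), ((⟨a, ha⟩ : T) : Unitization F T) ∈
      Submodule.span F {y : Unitization F T | IsNilpotent y} := by
    intro a ha
    have ha' : a ∈ Submodule.span F V := hspan ▸ ha
    induction ha' using Submodule.span_induction with
    | mem a haV =>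
      obtain ⟨k, hk, hak⟩ := hV a haV
      refine Submodule.subset_span ⟨k, ?_⟩
      have hfst : ((((⟨a, ha⟩ : T) : Unitization F T)) ^ k).fst = 0 := by
        rw [← Unitization.fstHom_apply (R := F), map_pow]
        simp [show k ≠ 0 by lia]
      have h := hinr _ hfst
      have hsnd := hπ ((((⟨a, ha⟩ : T) : Unitization F T)) ^ k).snd
      rw [← h, map_pow, hπ, hak] at hsnd
      rw [h, show ((((⟨a, ha⟩ : T) : Unitization F T)) ^ k).snd = 0 from Subtype.ext hsnd.symm,
        Unitization.inr_zero]
    | zero => exact zero_mem _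
    | add a b hx hy iha ihb =>
      rw [hspan] at hx hy
      have h := add_mem (iha hx) (ihb hy)
      rwa [← Unitization.inr_add] at h
    | smul c a hx iha =>
      rw [hspan] at hx
      have h := Submodule.smul_mem _ c (iha hx)
      rwa [← Unitization.inr_smul] at h
  obtain ⟨n, hn⟩ := Ideal.exists_list_prod_eq_zero_of_le_span_isNilpotent (F := F)
    (RingHom.ker (Unitization.fstHom F T)) (by
      intro x hx
      rw [hinr x hx]
      exact hnil x.snd x.snd.2)
  obtain ⟨f, hfS, hf⟩ := hnonnil (n + 1) (by simp)
  refine hf ?_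
  let g : Fin n → Unitization F T := fun i ↦ ((⟨f i.succ, hfS _⟩ : T) : Unitization F T)
  have hg : (List.ofFn fun i : Fin n ↦ f i.succ) = (List.ofFn g).map π := by
    simp only [List.map_ofFn]
    congr 1
    funext i
    exact (hπ ⟨f i.succ, hfS _⟩).symm
  have hprod := hn (List.ofFn g)
    (List.forall_mem_ofFn_iff.mpr fun i ↦
      Unitization.fst_inr F (⟨f i.succ, hfS _⟩ : T)) (by simp)
  rw [List.ofFn_succ, List.prod_cons, hg, ← map_list_prod, hprod, map_zero, mul_zero]
end

section
/- Let F be a field and A a finite-dimensional unital associative F-algebra. Let J ⊆ A be a right ideal (an F-subspace with x*a ∈ J for all x ∈ J, a ∈ A) that is not nilpotent, i.e., for every k ≥ 1 there exist x₁,…,x_k ∈ J with x₁*x₂*⋯*x_k ≠ 0. Then there exists an idempotent e ∈ J (e*e = e) such that the right ideal J'' = {x − e*x : x ∈ J} is nilpotent, i.e., there exists k ≥ 1 such that every product of k elements of J'' equals 0. (Equivalently, e + Rad(A) is a left identity element of (J + Rad(A))/Rad(A).) -/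
open Polynomial in
/-- A non-nilpotent element `x` of a finite-dimensional algebra has a right multiple which is a
nonzero idempotent. -/
theorem exists_isIdempotentElem_mul_of_not_isNilpotent {F A : Type*} [Field F] [Ring A]
    [Algebra F A] [FiniteDimensional F A] {x : A} (hx : ¬ IsNilpotent x) :
    ∃ a : A, IsIdempotentElem (x * a) ∧ x * a ≠ 0 := by
  have hp : minpoly F x ≠ 0 := minpoly.ne_zero (Algebra.IsIntegral.isIntegral x)
  obtain ⟨q, hq, hdvd⟩ := exists_eq_pow_rootMultiplicity_mul_and_not_dvd (minpoly F x) hp 0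
  rw [C_0, sub_zero] at hq hdvd
  generalize rootMultiplicity 0 (minpoly F x) = n at hq
  have hcop : IsCoprime (X ^ (n + 1)) q :=
    ((prime_X (R := F)).coprime_iff_not_dvd.2 hdvd).pow_left
  obtain ⟨u, v, huv⟩ := hcop
  have hroot : aeval x (X ^ (n + 1) * q) = 0 := by
    rw [pow_succ', mul_assoc, ← hq, map_mul, minpoly.aeval, mul_zero]
  have he : x * aeval x (X ^ n * u) = aeval x (u * X ^ (n + 1)) := by
    rw [show u * X ^ (n + 1) = X * (X ^ n * u) by ring, map_mul _ X, aeval_X]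
  refine ⟨aeval x (X ^ n * u), ?_, fun h0 => hx ⟨n + 1, ?_⟩⟩
  · rw [he, IsIdempotentElem, ← map_mul, ← sub_eq_zero, ← map_sub]
    have : u * X ^ (n + 1) * (u * X ^ (n + 1)) - u * X ^ (n + 1)
        = -(u * v) * (X ^ (n + 1) * q) := by
      linear_combination (u * X ^ (n + 1)) * huv
    rw [this, map_mul, hroot, mul_zero]
  · rw [he] at h0
    have : (X : F[X]) ^ (n + 1) = X ^ (n + 1) * (u * X ^ (n + 1)) + v * (X ^ (n + 1) * q) := by
      linear_combination -X ^ (n + 1) * huv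
    have h := congrArg (aeval x) this
    rwa [map_add, map_mul, map_mul _ v, h0, hroot, mul_zero, mul_zero, add_zero, map_pow,
      aeval_X] at h

/-- If all right multiples of `x` are nilpotent, then `x` lies in the Jacobson radical. -/
theorem mem_jacobson_of_forall_isNilpotent_mul {A : Type*} [Ring A] {x : A}
    (hx : ∀ a, IsNilpotent (x * a)) : x ∈ Ring.jacobson A := by
  rw [← Ideal.jacobson_bot, Ideal.mem_jacobson_iff]
  intro y
  have hyx : IsNilpotent (y * x) := by
    obtain ⟨n, hn⟩ := hx y
    refine ⟨n + 1, ?_⟩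
    rw [pow_succ, ← mul_assoc, mul_pow_mul, hn, mul_zero, zero_mul]
  obtain ⟨z, hz⟩ := hyx.isUnit_one_add.exists_left_inv
  refine ⟨z, ?_⟩
  rw [Ideal.mem_bot, ← hz]
  noncomm_ring

theorem List.prod_ofFn_mem_ideal_pow {A : Type*} [Ring A] (I : Ideal A) :
    ∀ {k : ℕ} (f : Fin k → A), (∀ i, f i ∈ I) → (List.ofFn f).prod ∈ I ^ k
  | 0, _, _ => by simp [Submodule.pow_zero]
  | k + 1, f, hf => by
    rw [List.ofFn_succ', List.prod_concat, Submodule.pow_succ]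
    exact Ideal.mul_mem_mul (List.prod_ofFn_mem_ideal_pow I _ fun i => hf i.castSucc) (hf _)

/-- If left multiplication by `e` kills a nonzero idempotent `f`, then `e + f - f * e` is an
idempotent generating a strictly larger right ideal than `e`. -/
theorem IsIdempotentElem.range_mulLeft_lt {F A : Type*} [Field F] [Ring A] [Algebra F A]
    {e f : A} (he : IsIdempotentElem e) (hf : IsIdempotentElem f) (hef : e * f = 0)
    (hf0 : f ≠ 0) :
    LinearMap.range (LinearMap.mulLeft F e) <
      LinearMap.range (LinearMap.mulLeft F (e + f - f * e)) := by
  have hfee : f * e * e = f * e := by rw [mul_assoc, he.eq]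
  have hfef : f * e * f = 0 := by rw [mul_assoc, hef, mul_zero]
  refine SetLike.lt_iff_le_and_exists.2 ⟨?_, f, LinearMap.mem_range.2 ⟨f, ?_⟩, ?_⟩
  · rintro _ ⟨y, rfl⟩
    refine ⟨e * y, ?_⟩
    simp only [LinearMap.mulLeft_apply]
    rw [← mul_assoc, sub_mul, add_mul, he.eq, hfee, add_sub_cancel_right]
  · rw [LinearMap.mulLeft_apply, sub_mul, add_mul, hef, hf.eq, hfef, zero_add, sub_zero]
  · rintro ⟨y, hy⟩
    rw [LinearMap.mulLeft_apply] at hy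
    apply hf0
    rw [← hef, ← hy, ← mul_assoc, he.eq]

theorem IsIdempotentElem.add_sub_mul_of_mul_eq_zero {A : Type*} [Ring A] {e f : A}
    (he : IsIdempotentElem e) (hf : IsIdempotentElem f) (hef : e * f = 0) :
    IsIdempotentElem (e + f - f * e) := by
  have hee := he.eq
  have hff := hf.eq
  have h1 : f * e * e = f * e := by rw [mul_assoc, hee]
  have h2 : f * e * f = 0 := by rw [mul_assoc, hef, mul_zero]
  rw [IsIdempotentElem, mul_sub, ← mul_assoc, mul_add]
  simp only [sub_mul, add_mul, hee, hff, hef, h1, h2, zero_mul]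
  abel

/-- A non-nilpotent right ideal J of a finite-dimensional unital algebra
contains an idempotent e such that the right ideal {x - e*x : x ∈ J} is
nilpotent. -/
theorem stmt_13 {F A : Type*} [Field F] [Ring A] [Algebra F A]
    [FiniteDimensional F A]
    (J : Submodule F A) (hJr : ∀ x ∈ J, ∀ a : A, x * a ∈ J)
    (hnonnil : ∀ k : ℕ, 1 ≤ k → ∃ f : Fin k → A,
      (∀ i, f i ∈ J) ∧ (List.ofFn f).prod ≠ 0) :
    ∃ e ∈ J, e * e = e ∧
      ∃ k : ℕ, 1 ≤ k ∧ ∀ f : Fin k → A,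
        (∀ i, ∃ x ∈ J, f i = x - e * x) → (List.ofFn f).prod = 0 := by
  let S : Set A := {e | e ∈ J ∧ IsIdempotentElem e}
  obtain ⟨e, ⟨heJ, he⟩, hmax⟩ := (InvImage.wf
    (fun e : A => LinearMap.range (LinearMap.mulLeft F e))
    (wellFounded_gt (α := Submodule F A))).has_min S ⟨0, J.zero_mem, IsIdempotentElem.zero⟩
  have : IsArtinianRing A := isArtinian_of_tower F inferInstance
  have hmem : ∀ x ∈ J, x - e * x ∈ Ring.jacobson A := by
    refine fun x hx => mem_jacobson_of_forall_isNilpotent_mul fun a => ?_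
    by_contra hnil
    obtain ⟨b, hf, hf0⟩ := exists_isIdempotentElem_mul_of_not_isNilpotent (F := F) hnil
    have hfJ : (x - e * x) * a * b ∈ J :=
      hJr _ (hJr _ (J.sub_mem hx (hJr e heJ x)) a) b
    have hef : e * ((x - e * x) * a * b) = 0 := by
      rw [← mul_assoc, ← mul_assoc, mul_sub, ← mul_assoc, he.eq, sub_self, zero_mul, zero_mul]
    exact hmax _ ⟨J.sub_mem (J.add_mem heJ hfJ) (hJr _ hfJ e),
      he.add_sub_mul_of_mul_eq_zero hf hef⟩ (he.range_mulLeft_lt hf hef hf0)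
  obtain ⟨n, hn⟩ := IsSemiprimaryRing.isNilpotent (R := A)
  refine ⟨e, heJ, he, n + 1, n.succ_pos, fun f hf => ?_⟩
  have hprod := List.prod_ofFn_mem_ideal_pow (Ring.jacobson A) f fun i => by
    obtain ⟨x, hx, hfx⟩ := hf i
    exact hfx ▸ hmem x hx
  rwa [Submodule.pow_succ, hn, zero_mul] at hprod
end

section
/- Let F be a field with char F ≠ 2, and let A be a finite-dimensional unital associative F-algebra equipped with an F-linear involution *. Let J be a two-sided ideal of A with J* ⊆ J and J nilpotent (e.g., J = Rad(A)). Let E ∈ A be invertible with E* = E, and suppose there exists Y ∈ A such that Y**Y − E ∈ J (i.e., Y*Y ≡ E modulo J). Then there exists X ∈ A with X**X = E. -/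
open Polynomial in
/-- Truncations of the power series `(1 - X) ^ (-1 / 2)`, away from characteristic two. -/
theorem exists_X_pow_dvd_one_sub_sq_mul {F : Type*} [Field F] (h2 : (2 : F) ≠ 0) (n : ℕ) :
    ∃ p : F[X], X ^ (n + 1) ∣ 1 - p ^ 2 * (1 - X) := by
  induction n with
  | zero => exact ⟨1, by simp⟩
  | succ n ih =>
    obtain ⟨p, r, hr⟩ := ih
    have hc : (2 : F[X]) * C (2⁻¹ : F) = 1 := by
      rw [show (2 : F[X]) = C 2 from rfl, ← C_mul, mul_inv_cancel₀ h2, C_1]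
    set c : F[X] := C 2⁻¹
    set e : F[X] := X ^ (n + 1) * r with he
    refine ⟨p * (1 + c * e), X ^ n * r ^ 2 * (c ^ 2 * (3 + e)), ?_⟩
    have hX : X ^ (n + 1 + 1) * (X ^ n * r ^ 2 * (c ^ 2 * (3 + e))) = e ^ 2 * (c ^ 2 * (3 + e)) := by
      rw [he]; ring
    rw [hX]
    linear_combination (1 + c * e) ^ 2 * hr + (-e - 2 * c * e ^ 2) * hc

/-- Polynomials in `M` are self-adjoint with respect to `E` if `M` is. -/
theorem star_aeval_mul_eq_mul_aeval {F A : Type*} [Field F] [StarRing F] [TrivialStar F]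
    [Ring A] [Algebra F A] [StarRing A] [StarModule F A] {E M : A}
    (h : star M * E = E * M) (p : Polynomial F) :
    star (Polynomial.aeval M p) * E = E * Polynomial.aeval M p := by
  have hpow (n : ℕ) : star M ^ n * E = E * M ^ n :=
    ((show SemiconjBy E M (star M) from h.symm).pow_right n).eq.symm
  induction p using Polynomial.induction_on' with
  | add p q hp hq => simp [add_mul, mul_add, hp, hq]
  | monomial n a =>
    rw [Polynomial.aeval_monomial, ← Algebra.smul_def, star_smul, star_trivial, star_pow,
      smul_mul_assoc, hpow, mul_smul_comm]

/-- Lifting a solution of the *-symmetric decomposition problem modulo a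
nilpotent *-invariant two-sided ideal: if star Y * Y ≡ E modulo J for an
invertible *-symmetric E, then there is X with star X * X = E. -/
theorem stmt_14 {F A : Type*} [Field F] [StarRing F] [TrivialStar F]
    (h2 : (2 : F) ≠ 0)
    [Ring A] [Algebra F A] [StarRing A] [StarModule F A]
    [FiniteDimensional F A]
    (J : Submodule F A)
    (hJl : ∀ x ∈ J, ∀ a : A, a * x ∈ J) (hJr : ∀ x ∈ J, ∀ a : A, x * a ∈ J)
    (hJstar : ∀ x ∈ J, star x ∈ J)
    (hJnil : ∃ k : ℕ, 1 ≤ k ∧ ∀ f : Fin k → A,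
      (∀ i, f i ∈ J) → (List.ofFn f).prod = 0)
    (E : A) (hE : IsUnit E) (hEstar : star E = E)
    (Y : A) (hY : star Y * Y - E ∈ J) :
    ∃ X : A, star X * X = E := by
  obtain ⟨k, -, hk⟩ := hJnil
  obtain ⟨u, rfl⟩ := hE
  obtain ⟨M, hM⟩ : ∃ M : A, M = ↑u⁻¹ * (u - star Y * Y) := ⟨_, rfl⟩
  have hMJ : M ∈ J := hM ▸ hJl _ (by simpa using J.neg_mem hY) _
  have hMk : M ^ k = 0 := by simpa using hk (fun _ => M) fun _ => hMJ
  have huM : (u : A) * M = u - star Y * Y := by rw [hM, Units.mul_inv_cancel_left]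
  have hsymm : star M * (u : A) = u * M := by
    have h := congrArg star huM
    rwa [star_mul, star_sub, star_mul, star_star, hEstar, ← huM] at h
  have hYY : star Y * Y = u * (1 - M) := by rw [mul_sub, huM]; simp
  obtain ⟨p, q, hq⟩ := exists_X_pow_dvd_one_sub_sq_mul h2 k
  have hp : Polynomial.aeval M p * (1 - M) * Polynomial.aeval M p = 1 := by
    have h := congrArg (Polynomial.aeval M) hq
    rw [show p ^ 2 * (1 - Polynomial.X) = p * (1 - Polynomial.X) * p by ring] at h
    simp only [map_sub, map_mul, map_one, map_pow, Polynomial.aeval_X, pow_succ, hMk,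
      zero_mul] at h
    exact (sub_eq_zero.mp h).symm
  refine ⟨Y * Polynomial.aeval M p, ?_⟩
  calc star (Y * Polynomial.aeval M p) * (Y * Polynomial.aeval M p)
      = star (Polynomial.aeval M p) * (star Y * Y) * Polynomial.aeval M p := by
        simp only [star_mul, mul_assoc]
    _ = u * (Polynomial.aeval M p * (1 - M) * Polynomial.aeval M p) := by
        rw [hYY, ← mul_assoc, star_aeval_mul_eq_mul_aeval hsymm]
        simp only [mul_assoc]
    _ = u := by rw [hp, mul_one]
end

section
/- Let R be a ring with an involution * (an involutive anti-automorphism: (xy)* = y*·x*, (x+y)* = x* + y*, (x*)* = x). Suppose e ∈ R is a central idempotent with e* = 1 − e. Then for every E ∈ R with E* = E, the element X = E*e + (1 − e) satisfies X**X = E. In particular, in a *-algebra of exchange type every *-symmetric element E admits a decomposition E = X*X. -/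
/-- In a ring with involution, if e is a central idempotent with
star e = 1 - e (exchange type), then every *-symmetric element E admits the
decomposition E = star X * X with X = E*e + (1 - e). -/
theorem stmt_15 {R : Type*} [Ring R] [StarRing R]
    (e : R) (he : e * e = e) (hcentral : ∀ x : R, e * x = x * e)
    (hstar : star e = 1 - e)
    (E : R) (hE : star E = E) :
    star (E * e + (1 - e)) * (E * e + (1 - e)) = E := by
  have hX : star (E * e + (1 - e)) = E * (1 - e) + e := by
    rw [star_add, star_mul, star_sub, star_one, hstar, hE, sub_sub_cancel, sub_mul, mul_sub,
      one_mul, mul_one, hcentral E]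
  have hleft : (1 - e) * (E * e + (1 - e)) = 1 - e := by
    rw [← hcentral E, mul_add, ← mul_assoc, sub_mul 1 e e, one_mul, he, sub_self,
      zero_mul, zero_add, mul_sub, mul_one, sub_mul, one_mul, he, sub_self, sub_zero]
  have hright : e * (E * e + (1 - e)) = E * e := by
    rw [← hcentral E, mul_add, ← mul_assoc, he, mul_sub, mul_one, he, sub_self, add_zero]
  rw [hX, add_mul, mul_assoc, hleft, hright, ← mul_add, sub_add_cancel, mul_one]
end

section
/- Let F be a field, ε ∈ {1,−1}, n a natural number. Let A ∈ GL(n,F) with Aᵀ = ε•A, and define the involution X* = A⁻¹*Xᵀ*A on M(n,F). Let E ∈ GL(n,F) satisfy E* = E, i.e., A⁻¹*Eᵀ*A = E. Then: (1) the matrix A*E satisfies (A*E)ᵀ = ε•(A*E), i.e., it is a form of the same type as A; and (2) there exists X ∈ M(n,F) with X**X = E (i.e., A⁻¹*Xᵀ*A*X = E) if and only if there exists Y ∈ GL(n,F) with Yᵀ*A*Y = A*E, i.e., if and only if the forms A and A*E are isometric. -/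
open Matrix

/-- For the involution X ↦ A⁻¹XᵀA attached to an invertible ε-symmetric form A,
a *-symmetric invertible E gives a form A*E of the same type as A, and the
*-symmetric decomposition problem for E is equivalent to the isometry problem
for the single forms A and A*E. -/
theorem stmt_16 {F : Type*} [Field F] (ε : F) (hε : ε = 1 ∨ ε = -1) (n : ℕ)
    (A : Matrix (Fin n) (Fin n) F) (hA : IsUnit A) (hAsym : Aᵀ = ε • A)
    (E : Matrix (Fin n) (Fin n) F) (hE : IsUnit E)
    (hEsym : A⁻¹ * Eᵀ * A = E) :
    (A * E)ᵀ = ε • (A * E) ∧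
      ((∃ X : Matrix (Fin n) (Fin n) F, A⁻¹ * Xᵀ * A * X = E) ↔
        (∃ Y : Matrix (Fin n) (Fin n) F, IsUnit Y ∧ Yᵀ * A * Y = A * E)) := by
  have hdet : IsUnit A.det := (isUnit_iff_isUnit_det A).mp hA
  have decomp_iff (B C : Matrix (Fin n) (Fin n) F) : A⁻¹ * B = C ↔ B = A * C := by
    constructor
    · rintro rfl
      rw [mul_nonsing_inv_cancel_left _ _ hdet]
    · rintro rfl
      rw [nonsing_inv_mul_cancel_left _ _ hdet]
  refine ⟨?_, ?_⟩
  · rw [Matrix.mul_assoc, decomp_iff] at hEsym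
    rw [transpose_mul, hAsym, Matrix.mul_smul, hEsym]
  · constructor
    · rintro ⟨X, hX⟩
      refine ⟨X, ?_, ?_⟩
      · rw [← hX, isUnit_iff_isUnit_det, det_mul] at hE
        exact (isUnit_iff_isUnit_det X).mpr (isUnit_of_mul_isUnit_right hE)
      · rwa [Matrix.mul_assoc, Matrix.mul_assoc, decomp_iff, ← Matrix.mul_assoc] at hX
    · rintro ⟨Y, -, hY⟩
      refine ⟨Y, ?_⟩
      rwa [Matrix.mul_assoc, Matrix.mul_assoc, decomp_iff, ← Matrix.mul_assoc]
end

section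
/- Let F be a field with char F ≠ 2, and let A be a finite-dimensional unital associative F-algebra equipped with an F-linear involution *. Let J be a nilpotent two-sided ideal of A with J* = J, and let S be a *-invariant unital F-subalgebra of A (S* = S) such that A = J ⊕ S as F-vector spaces (a *-invariant Wedderburn–Malcev complement). Let a' ∈ A be invertible with a'* = a'. Then there exists u ∈ A with u − 1 ∈ J such that u**a'*u ∈ S. -/
theorem Submodule.pow_eq_bot_of_prod_ofFn_eq_zero {F A : Type*} [CommSemiring F] [Semiring A]
    [Algebra F A] {J : Submodule F A} {k : ℕ}
    (h : ∀ f : Fin k → A, (∀ i, f i ∈ J) → (List.ofFn f).prod = 0) : J ^ k = ⊥ := by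
  rw [← Submodule.span_eq J, Submodule.span_pow, Submodule.span_eq_bot]
  intro x hx
  obtain ⟨f, rfl⟩ := Set.mem_pow.mp hx
  exact h _ fun i => (f i).2

/-- One Newton step: congruence by `1 - c e / 2`, where `c = b⁻¹` and `e = b - s`, replaces the
defect `e` by the quadratic term `e c e / 4`. -/
theorem star_mul_mul_one_sub_half_smul {F A : Type*} [Field F] [StarRing F] [TrivialStar F]
    (h2 : (2 : F) ≠ 0) [Ring A] [Algebra F A] [StarRing A] [StarModule F A] {b c s : A}
    (hbc : b * c = 1) (hcb : c * b = 1) (hb : star b = b) (hc : star c = c) (hs : star s = s) :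
    star (1 - (2⁻¹ : F) • (c * (b - s))) * b * (1 - (2⁻¹ : F) • (c * (b - s))) - s =
      ((2⁻¹ : F) * 2⁻¹) • ((b - s) * (c * (b - s))) := by
  obtain ⟨e, rfl⟩ : ∃ e, s = b - e := ⟨b - s, by abel⟩
  have he : star e = e := by simpa [hb] using hs
  have hce : b * (c * e) = e := by rw [← mul_assoc, hbc, one_mul]
  have hec : e * c * b = e := by rw [mul_assoc, hcb, mul_one]
  have hhalf : e - (2⁻¹ : F) • e - (2⁻¹ : F) • e = 0 := by
    rw [sub_sub, ← add_smul, ← two_mul, mul_inv_cancel₀ h2, one_smul, sub_self]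
  simp only [sub_sub_cancel, star_sub, star_one, star_smul, star_mul, he, hc, star_trivial,
    sub_mul, mul_sub, one_mul, mul_one, smul_mul_assoc, mul_smul_comm, hec, hce, mul_smul, smul_sub]
  rw [← sub_eq_zero, ← hhalf]
  abel

/-- A symmetric unit congruent to a symmetric `s` modulo a nilpotent ideal `J` can be moved
arbitrarily close to `s`, in the `J`-adic sense, by a congruence with a unit in `1 + J`. -/
theorem exists_congruence_sub_mem_pow {F A : Type*} [Field F] [StarRing F] [TrivialStar F]
    (h2 : (2 : F) ≠ 0) [Ring A] [Algebra F A] [StarRing A] [StarModule F A] {J : Submodule F A}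
    (hJl : ∀ x ∈ J, ∀ a : A, a * x ∈ J) (hJr : ∀ x ∈ J, ∀ a : A, x * a ∈ J)
    (hJnil : ∀ x ∈ J, IsNilpotent x) {a s : A} (ha : IsUnit a) (hastar : star a = a)
    (hs : star s = s) (has : a - s ∈ J) (n : ℕ) :
    ∃ u : A, IsUnit u ∧ u - 1 ∈ J ∧ star u * a * u - s ∈ J ∧
      star u * a * u - s ∈ J ^ (n + 1) := by
  induction n with
  | zero => exact ⟨1, isUnit_one, by simp, by simpa using has, by simpa using has⟩
  | succ n ih =>
    obtain ⟨u, hu, hu1, hJ, hpow⟩ := ih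
    have hb : star (star u * a * u) = star u * a * u := by simp [hastar, mul_assoc]
    obtain ⟨w, hw⟩ : IsUnit (star u * a * u) := (hu.star.mul ha).mul hu
    have hstarw : star w = w := Units.ext (by rw [Units.coe_star, hw, hb])
    have hc : star (↑w⁻¹ : A) = ↑w⁻¹ := by rw [← Units.coe_star, star_inv, hstarw]
    have key := star_mul_mul_one_sub_half_smul (F := F) h2 (b := star u * a * u) (c := ↑w⁻¹)
      (by rw [← hw, Units.mul_inv]) (by rw [← hw, Units.inv_mul]) hb hc hs
    have hce := hJl _ hJ (↑w⁻¹ : A)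
    have hx := J.smul_mem (2⁻¹ : F) hce
    set x := (2⁻¹ : F) • ((↑w⁻¹ : A) * (star u * a * u - s))
    have hnew : star (u * (1 - x)) * a * (u * (1 - x)) - s =
        star (1 - x) * (star u * a * u) * (1 - x) - s := by
      simp only [star_mul, mul_assoc]
    refine ⟨u * (1 - x), hu.mul (hJnil x hx).isUnit_one_sub, ?_, ?_, ?_⟩
    · rw [show u * (1 - x) - 1 = (u - 1) - u * x by noncomm_ring]
      exact J.sub_mem hu1 (hJl x hx u)
    · rw [hnew, key]
      exact J.smul_mem _ (hJr _ hJ _)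
    · rw [hnew, key, pow_succ]
      exact Submodule.smul_mem _ _ (Submodule.mul_mem_mul hpow hce)

/-- Given a *-invariant Wedderburn–Malcev (Taft) decomposition A = J ⊕ S with
J a nilpotent *-invariant two-sided ideal and S a *-invariant unital
subalgebra, every invertible *-symmetric a' can be moved into S by a
congruence u* a' u with u ∈ 1 + J. -/
theorem stmt_17 {F A : Type*} [Field F] [StarRing F] [TrivialStar F]
    (h2 : (2 : F) ≠ 0)
    [Ring A] [Algebra F A] [StarRing A] [StarModule F A]
    [FiniteDimensional F A]
    (J : Submodule F A)
    (hJl : ∀ x ∈ J, ∀ a : A, a * x ∈ J) (hJr : ∀ x ∈ J, ∀ a : A, x * a ∈ J)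
    (hJstar : ∀ x ∈ J, star x ∈ J)
    (hJnil : ∃ k : ℕ, 1 ≤ k ∧ ∀ f : Fin k → A,
      (∀ i, f i ∈ J) → (List.ofFn f).prod = 0)
    (S : Subalgebra F A) (hSstar : ∀ x ∈ S, star x ∈ S)
    (hcompl : IsCompl J (Subalgebra.toSubmodule S))
    (a' : A) (ha'unit : IsUnit a') (ha'star : star a' = a') :
    ∃ u : A, u - 1 ∈ J ∧ star u * a' * u ∈ S := by
  obtain ⟨k, hk, hprod⟩ := hJnil
  have hbot : J ^ k = ⊥ := Submodule.pow_eq_bot_of_prod_ofFn_eq_zero hprod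
  have hnil : ∀ x ∈ J, IsNilpotent x := fun x hx =>
    ⟨k, by simpa [hbot] using Submodule.pow_mem_pow J hx k⟩
  obtain ⟨j, hj, s, hsS, rfl⟩ := Submodule.mem_sup.mp
    (hcompl.sup_eq_top ▸ Submodule.mem_top : a' ∈ J ⊔ Subalgebra.toSubmodule S)
  have hsS' : s ∈ S := hsS
  have hs : star s = s := by
    rw [star_add] at ha'star
    have hdiff : star s - s = j - star j := by
      rw [sub_eq_sub_iff_add_eq_add, add_comm, ha'star]
    exact sub_eq_zero.mp (Submodule.disjoint_def.mp hcompl.disjoint _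
      (hdiff ▸ J.sub_mem hj (hJstar j hj)) (S.sub_mem (hSstar s hsS') hsS'))
  obtain ⟨u, -, hu, -, hpow⟩ := exists_congruence_sub_mem_pow h2 hJl hJr hnil ha'unit ha'star hs
    (by simpa using hj) (k - 1)
  rw [Nat.sub_add_cancel hk, hbot, Submodule.mem_bot, sub_eq_zero] at hpow
  exact ⟨u, hu, hpow.symm.subst (motive := (· ∈ S)) hsS'⟩
end

section
/- Let F be a field, ε ∈ {1,−1}, and let B₁,…,B_m, C₁,…,C_m ∈ M(n,F) satisfy B_iᵀ = ε•B_i and C_iᵀ = ε•C_i. Suppose S, T ∈ GL(n,F), k + d = n, and B'₁,…,B'_m, C'₁,…,C'_m ∈ M(k,F) are such that Sᵀ*B_i*S = [[B'_i, 0],[0, 0]] and Tᵀ*C_i*T = [[C'_i, 0],[0, 0]] (block matrices with blocks of sizes k and d) for all i, where ⋂_i ker(B'_i) = 0 and ⋂_i ker(C'_i) = 0 (the extracted tuples are non-degenerate). Then there exists U ∈ GL(n,F) with Uᵀ*B_i*U = C_i for all i, if and only if there exists V ∈ GL(k,F) with Vᵀ*B'_i*V = C'_i for all i. -/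
open Matrix

/-- Replacing both tuples by congruent ones does not affect whether they are isometric. -/
theorem exists_isometry_congr_iff {F ι n : Type*} [CommRing F] [Fintype n] [DecidableEq n]
    {B C : ι → Matrix n n F} {S T : Matrix n n F} (hS : IsUnit S) (hT : IsUnit T) :
    (∃ U : Matrix n n F, IsUnit U ∧ ∀ i, Uᵀ * B i * U = C i) ↔
      ∃ W : Matrix n n F, IsUnit W ∧ ∀ i, Wᵀ * (Sᵀ * B i * S) * W = Tᵀ * C i * T := by
  have hSd : IsUnit S.det := (isUnit_iff_isUnit_det S).1 hS
  have hTd : IsUnit T.det := (isUnit_iff_isUnit_det T).1 hT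
  constructor
  · rintro ⟨U, hU, h⟩
    refine ⟨S⁻¹ * U * T, ((isUnit_nonsing_inv_iff.2 hS).mul hU).mul hT, fun i => ?_⟩
    have hcancel : S * (S⁻¹ * U * T) = U * T := by
      rw [Matrix.mul_assoc, mul_nonsing_inv_cancel_left _ _ hSd]
    calc (S⁻¹ * U * T)ᵀ * (Sᵀ * B i * S) * (S⁻¹ * U * T)
        = (S * (S⁻¹ * U * T))ᵀ * B i * (S * (S⁻¹ * U * T)) := by
          simp only [transpose_mul, Matrix.mul_assoc]
      _ = Tᵀ * (Uᵀ * B i * U) * T := by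
          rw [hcancel]
          simp only [transpose_mul, Matrix.mul_assoc]
      _ = Tᵀ * C i * T := by rw [h]
  · rintro ⟨W, hW, h⟩
    refine ⟨S * W * T⁻¹, (hS.mul hW).mul (isUnit_nonsing_inv_iff.2 hT), fun i => ?_⟩
    calc (S * W * T⁻¹)ᵀ * B i * (S * W * T⁻¹)
        = (T⁻¹)ᵀ * (Wᵀ * (Sᵀ * B i * S) * W) * T⁻¹ := by
          simp only [transpose_mul, Matrix.mul_assoc]
      _ = (T * T⁻¹)ᵀ * C i * (T * T⁻¹) := by
          rw [h]
          simp only [transpose_mul, Matrix.mul_assoc]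
      _ = C i := by simp [mul_nonsing_inv _ hTd]

/-- A matrix pulling some tuple back to a non-degenerate tuple is invertible. -/
theorem isUnit_of_transpose_mul_mul_eq {F ι n : Type*} [Field F] [Fintype n] [DecidableEq n]
    {B C : ι → Matrix n n F} {V : Matrix n n F} (h : ∀ i, Vᵀ * B i * V = C i)
    (hC : ⨅ i, LinearMap.ker (C i).mulVecLin = ⊥) : IsUnit V := by
  rw [← mulVec_injective_iff_isUnit, ← coe_mulVecLin, ← LinearMap.ker_eq_bot, eq_bot_iff, ← hC]
  refine le_iInf fun i v hv => ?_
  rw [LinearMap.mem_ker, mulVecLin_apply] at hv ⊢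
  rw [← h i, ← mulVec_mulVec, hv, mulVec_zero]

/-- Reduction of the isometry problem for ε-symmetric tuples to the
non-degenerate parts: B and C (of size n = k + d) are isometric iff the
extracted non-degenerate tuples B' and C' (of size k) are isometric. -/
theorem stmt_18 {F : Type*} [Field F] (ε : F) (hε : ε = 1 ∨ ε = -1)
    (k d m : ℕ)
    (B C : Fin m → Matrix (Fin k ⊕ Fin d) (Fin k ⊕ Fin d) F)
    (hB : ∀ i, (B i)ᵀ = ε • B i) (hC : ∀ i, (C i)ᵀ = ε • C i)
    (S T : Matrix (Fin k ⊕ Fin d) (Fin k ⊕ Fin d) F)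
    (hS : IsUnit S) (hT : IsUnit T)
    (B' C' : Fin m → Matrix (Fin k) (Fin k) F)
    (hSB : ∀ i, Sᵀ * B i * S = Matrix.fromBlocks (B' i) 0 0 0)
    (hTC : ∀ i, Tᵀ * C i * T = Matrix.fromBlocks (C' i) 0 0 0)
    (hB' : ⨅ i, LinearMap.ker (B' i).mulVecLin = ⊥)
    (hC' : ⨅ i, LinearMap.ker (C' i).mulVecLin = ⊥) :
    (∃ U : Matrix (Fin k ⊕ Fin d) (Fin k ⊕ Fin d) F, IsUnit U ∧
        ∀ i, Uᵀ * B i * U = C i) ↔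
      (∃ V : Matrix (Fin k) (Fin k) F, IsUnit V ∧
        ∀ i, Vᵀ * B' i * V = C' i) := by
  rw [exists_isometry_congr_iff hS hT]
  simp only [hSB, hTC]
  constructor
  · rintro ⟨W, -, h⟩
    have hV : ∀ i, W.toBlocks₁₁ᵀ * B' i * W.toBlocks₁₁ = C' i := fun i => by
      have hi := h i
      rw [← fromBlocks_toBlocks W, fromBlocks_transpose, fromBlocks_multiply,
        fromBlocks_multiply, fromBlocks_inj] at hi
      simpa using hi.1
    exact ⟨_, isUnit_of_transpose_mul_mul_eq hV hC', hV⟩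
  · rintro ⟨V, hV, h⟩
    refine ⟨fromBlocks V 0 0 1, ?_, fun i => ?_⟩
    · rw [isUnit_iff_isUnit_det] at hV ⊢
      simpa using hV
    · simp [fromBlocks_transpose, fromBlocks_multiply, h]
end

section
/- Let F be a field with char F ≠ 2, ε ∈ {1,−1}, n ≥ 1, and let B₁,…,B_m ∈ M(n,F) satisfy B_iᵀ = ε•B_i and ⋂_i ker(B_i) = 0 (the tuple is non-degenerate). Let L = {Z ∈ M(n,F) : Z*B_i = B_i*Zᵀ for all i} (equivalently, Z ∈ L iff Z*B_i is ε-symmetric for all i). Then L cannot be spanned by nilpotent elements: the F-linear span of {Z ∈ L : Z is nilpotent} is a proper subspace of L. -/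
open Matrix

/-- Every nontrivial finite-dimensional algebra over an algebraically closed field has a full matrix
algebra as a quotient. -/
theorem exists_surjective_algHom_matrix (K A : Type*) [Field K] [IsAlgClosed K] [Ring A]
    [Algebra K A] [FiniteDimensional K A] [Nontrivial A] :
    ∃ (d : ℕ) (π : A →ₐ[K] Matrix (Fin d) (Fin d) K), NeZero d ∧ Function.Surjective π := by
  have : IsArtinianRing A := IsArtinianRing.of_finite K A
  have : IsSemisimpleRing (A ⧸ Ring.jacobson A) := inferInstance
  obtain ⟨n, d, hd, ⟨e⟩⟩ :=
    IsSemisimpleRing.exists_algEquiv_pi_matrix_of_isAlgClosed K (A ⧸ Ring.jacobson A)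
  have : Nontrivial (A ⧸ Ring.jacobson A) := by
    apply Ideal.Quotient.nontrivial_iff.mpr
    intro h
    obtain ⟨k, hk⟩ := IsSemiprimaryRing.isNilpotent (R := A)
    rw [h, Ideal.top_pow] at hk
    exact top_ne_bot hk
  have hn : Nonempty (Fin n) := by
    by_contra h
    rw [not_nonempty_iff] at h
    exact not_subsingleton _ e.toEquiv.subsingleton
  obtain ⟨i⟩ := hn
  refine ⟨d i, ((Pi.evalAlgHom K _ i).comp e.toAlgHom).comp
    (Ideal.Quotient.mkₐ K (Ring.jacobson A)), hd i, ?_⟩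
  exact ((Function.surjective_eval i).comp e.surjective).comp
    (Ideal.Quotient.mkₐ_surjective K _)

/-- The trace forms of two surjective matrix representations of the same degree are never
opposite. -/
theorem exists_trace_add_trace_ne_zero {K A : Type*} [Field K] (h2 : (2 : K) ≠ 0) [Ring A]
    [Algebra K A] {d : ℕ} [NeZero d] (π π' : A →ₐ[K] Matrix (Fin d) (Fin d) K)
    (hπ : Function.Surjective π) (hπ' : Function.Surjective π') :
    ∃ x, (π x).trace + (π' x).trace ≠ 0 := by
  by_cases hker : ∀ a, π a = 0 → π' a = 0
  · let f := (Ideal.Quotient.liftₐ (RingHom.ker π) π' hker).comp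
      (Ideal.quotientKerAlgEquivOfSurjective hπ).symm.toAlgHom
    have hf : ∀ x, f (π x) = π' x := fun x => by
      simp only [f, AlgHom.comp_apply]
      erw [Ideal.quotientKerAlgEquivOfSurjective_symm_apply hπ x]
      rfl
    obtain ⟨x, hx⟩ := hπ (single 0 0 1)
    refine ⟨x, ?_⟩
    rw [← hf, trace_map', hx, trace_single_eq_same, one_add_one_eq_two]
    exact h2
  · push Not at hker
    obtain ⟨a, ha, ha'⟩ := hker
    obtain ⟨i, j, hij⟩ : ∃ i j, π' a i j ≠ 0 := by
      by_contra! h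
      exact ha' (Matrix.ext h)
    obtain ⟨u, hu⟩ := hπ' (single j i 1)
    refine ⟨u * a, ?_⟩
    rw [map_mul, map_mul, ha, hu, mul_zero, trace_zero, zero_add]
    simpa [trace_single_mul] using hij

/-- For an algebra with an anti-automorphism `s`, some linear form kills all nilpotents but not
every `a + s a`. -/
theorem exists_dual_of_antiautomorphism {K A : Type*} [Field K] [IsAlgClosed K] (h2 : (2 : K) ≠ 0)
    [Ring A] [Algebra K A] [FiniteDimensional K A] [Nontrivial A] (s : A ≃ₐ[K] Aᵐᵒᵖ) :
    ∃ τ : A →ₗ[K] K, (∀ a, IsNilpotent a → τ a = 0) ∧ ∃ a, τ (a + (s a).unop) ≠ 0 := by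
  obtain ⟨d, π, _, hπ⟩ := exists_surjective_algHom_matrix K A
  let π' : A →ₐ[K] Matrix (Fin d) (Fin d) K :=
    ((transposeAlgEquiv (Fin d) K K).symm.toAlgHom.comp (AlgHom.op π)).comp s.toAlgHom
  have hπ'_apply : ∀ a, π' a = (π (s a).unop)ᵀ := fun a => rfl
  have hπ' : Function.Surjective π' := fun M => by
    obtain ⟨a, ha⟩ := hπ Mᵀ
    exact ⟨s.symm (.op a), by simp [hπ'_apply, ha]⟩
  obtain ⟨a, ha⟩ := exists_trace_add_trace_ne_zero h2 π π' hπ hπ'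
  refine ⟨traceLinearMap (Fin d) K K ∘ₗ π.toLinearMap, fun a ha => ?_, a, ?_⟩
  · exact (isNilpotent_trace_of_isNilpotent (ha.map π)).eq_zero
  · simpa [hπ'_apply] using ha

/-- The adjoint algebra of a tuple of matrices, as the algebra of pairs `(Z, Y)` with
`Z * B i = B i * Y` for all `i`. -/
def adjointPairs {ι m R : Type*} [CommRing R] [Fintype m] [DecidableEq m]
    (B : ι → Matrix m m R) : Subalgebra R (Matrix m m R × Matrix m m R) where
  carrier := {p | ∀ i, p.1 * B i = B i * p.2}
  mul_mem' {p q} hp hq i := by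
    rw [Prod.fst_mul, Prod.snd_mul, Matrix.mul_assoc, hq i, ← Matrix.mul_assoc, hp i,
      Matrix.mul_assoc]
  add_mem' {p q} hp hq i := by
    rw [Prod.fst_add, Prod.snd_add, Matrix.add_mul, hp i, hq i, Matrix.mul_add]
  algebraMap_mem' r i := by
    simp [Algebra.algebraMap_eq_smul_one]

theorem transpose_swap_mem_adjointPairs {ι m R : Type*} [CommRing R] [Fintype m] [DecidableEq m]
    {B : ι → Matrix m m R} {ε : R} (hε : IsUnit ε) (hB : ∀ i, (B i)ᵀ = ε • B i)
    {p : Matrix m m R × Matrix m m R} (hp : p ∈ adjointPairs B) :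
    (p.2ᵀ, p.1ᵀ) ∈ adjointPairs B := fun i => by
  have h := congrArg transpose (hp i)
  rw [transpose_mul, transpose_mul, hB, Matrix.smul_mul, Matrix.mul_smul] at h
  exact (hε.smul_left_cancel.mp h).symm

/-- The involution `(Z, Y) ↦ (Yᵀ, Zᵀ)` of the adjoint algebra of a tuple of `ε`-symmetric
matrices. -/
def adjointInvolution {ι m R : Type*} [CommRing R] [Fintype m] [DecidableEq m]
    {B : ι → Matrix m m R} {ε : R} (hε : IsUnit ε) (hB : ∀ i, (B i)ᵀ = ε • B i) :
    adjointPairs B ≃ₐ[R] (adjointPairs B)ᵐᵒᵖ where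
  toFun p := .op ⟨_, transpose_swap_mem_adjointPairs hε hB p.2⟩
  invFun p := ⟨_, transpose_swap_mem_adjointPairs hε hB p.unop.2⟩
  left_inv _ := rfl
  right_inv _ := rfl
  map_mul' p q := MulOpposite.unop_injective <| Subtype.ext <| by simp
  map_add' p q := MulOpposite.unop_injective <| Subtype.ext <| by simp
  commutes' r := MulOpposite.unop_injective <| Subtype.ext <| by
    simp [Algebra.algebraMap_eq_smul_one, Prod.ext_iff]

/-- Over an algebraically closed field, the self-adjoint matrices are not spanned by the nilpotent
ones. -/
theorem exists_selfAdjoint_notMem_span_isNilpotent {ι m K : Type*} [Field K] [IsAlgClosed K]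
    (h2 : (2 : K) ≠ 0) [Fintype m] [DecidableEq m] [Nonempty m] {B : ι → Matrix m m K} {ε : K}
    (hε : IsUnit ε) (hB : ∀ i, (B i)ᵀ = ε • B i) :
    ∃ Z : Matrix m m K, (∀ i, Z * B i = B i * Zᵀ) ∧
      Z ∉ Submodule.span K {Z : Matrix m m K | (∀ i, Z * B i = B i * Zᵀ) ∧ IsNilpotent Z} := by
  obtain ⟨τ, hτ, a, ha⟩ := exists_dual_of_antiautomorphism h2 (adjointInvolution hε hB)
  have hsymm : a.1.1 + a.1.2ᵀ = ((a + (adjointInvolution hε hB a).unop).1).1 := rfl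
  have hsymm' : (a.1.1 + a.1.2ᵀ)ᵀ = ((a + (adjointInvolution hε hB a).unop).1).2 := by
    rw [transpose_add, transpose_transpose, add_comm]
    rfl
  refine ⟨a.1.1 + a.1.2ᵀ, fun i => ?_, fun hmem => ?_⟩
  · rw [hsymm', hsymm]
    exact (a + (adjointInvolution hε hB a).unop).2 i
  have key : ∀ Z ∈ Submodule.span K
      {Z : Matrix m m K | (∀ i, Z * B i = B i * Zᵀ) ∧ IsNilpotent Z},
      ∃ hZ : (Z, Zᵀ) ∈ adjointPairs B, τ ⟨(Z, Zᵀ), hZ⟩ = 0 := by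
    intro Z hZ
    induction hZ using Submodule.span_induction with
    | mem Z hZ =>
      refine ⟨hZ.1, hτ _ ?_⟩
      obtain ⟨k, hk⟩ := hZ.2
      refine ⟨k, Subtype.ext (Prod.ext ?_ ?_)⟩
      · simpa using hk
      · simp [← transpose_pow, hk]
    | zero => exact ⟨fun i => by simp, map_zero τ⟩
    | add X Y _ _ hX hY =>
      obtain ⟨hX, hX'⟩ := hX
      obtain ⟨hY, hY'⟩ := hY
      refine ⟨add_mem hX hY, ?_⟩
      have := map_add τ ⟨_, hX⟩ ⟨_, hY⟩
      rwa [hX', hY', add_zero] at this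
    | smul c X _ hX =>
      obtain ⟨hX, hX'⟩ := hX
      refine ⟨(adjointPairs B).smul_mem hX c, ?_⟩
      have := map_smul τ c ⟨_, hX⟩
      rwa [hX', smul_zero] at this
  obtain ⟨hZ, hZ'⟩ := key _ hmem
  refine ha ?_
  rw [← hZ']
  exact congrArg τ (Subtype.ext (Prod.ext hsymm.symm hsymm'.symm))

theorem mul_map_algebraMap_map {m F K : Type*} [Field F] [Field K] [Algebra F K] [Fintype m]
    (f : K →ₗ[F] F) (Z : Matrix m m K) (B : Matrix m m F) :
    (Z * B.map (algebraMap F K)).map f = Z.map f * B := by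
  ext i j
  simp only [map_apply, mul_apply, map_sum]
  refine Finset.sum_congr rfl fun k _ => ?_
  rw [mul_comm, ← Algebra.smul_def, map_smul, smul_eq_mul, mul_comm]

theorem map_algebraMap_mul_map {m F K : Type*} [Field F] [Field K] [Algebra F K] [Fintype m]
    (f : K →ₗ[F] F) (Z : Matrix m m K) (B : Matrix m m F) :
    (B.map (algebraMap F K) * Z).map f = B * Z.map f := by
  ext i j
  simp only [map_apply, mul_apply, map_sum]
  refine Finset.sum_congr rfl fun k _ => ?_
  rw [← Algebra.smul_def, map_smul, smul_eq_mul]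

/-- A matrix over a field extension is a linear combination of its coordinate matrices. -/
theorem mem_span_range_map_map {m F K : Type*} [Field F] [Field K] [Algebra F K] [Fintype m]
    (Z : Matrix m m K) :
    Z ∈ Submodule.span K (Set.range fun f : K →ₗ[F] F => (Z.map f).map (algebraMap F K)) := by
  classical
  let b := Module.Basis.ofVectorSpace F K
  let S := Finset.univ.biUnion fun p : m × m => (b.repr (Z p.1 p.2)).support
  have hZ : Z = ∑ k ∈ S, b k • (Z.map (b.coord k)).map (algebraMap F K) := by
    ext i j
    have hS : (b.repr (Z i j)).support ⊆ S :=
      Finset.subset_biUnion_of_mem (fun p : m × m => (b.repr (Z p.1 p.2)).support)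
        (Finset.mem_univ (i, j))
    conv_lhs => rw [← b.linearCombination_repr (Z i j)]
    rw [Finsupp.linearCombination_apply, Finsupp.sum_of_support_subset _ hS _ (by simp),
      Matrix.sum_apply]
    refine Finset.sum_congr rfl fun k _ => ?_
    simp [Algebra.smul_def, mul_comm]
  rw [hZ]
  refine Submodule.sum_mem _ fun k _ => Submodule.smul_mem _ _ (Submodule.subset_span ?_)
  rw [← hZ]
  exact ⟨b.coord k, rfl⟩

/-- For a non-degenerate tuple of ε-symmetric matrices B over a field of
characteristic ≠ 2, the space L^ε(B) = {Z : Z B_i = B_i Zᵀ for all i} cannot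
be spanned by its nilpotent elements. -/
theorem stmt_19 {F : Type*} [Field F] (h2 : (2 : F) ≠ 0)
    (ε : F) (hε : ε = 1 ∨ ε = -1) (n m : ℕ) (hn : 1 ≤ n)
    (B : Fin m → Matrix (Fin n) (Fin n) F)
    (hB : ∀ i, (B i)ᵀ = ε • B i)
    (hnd : ⨅ i, LinearMap.ker (B i).mulVecLin = ⊥) :
    Submodule.span F
        {Z : Matrix (Fin n) (Fin n) F |
          (∀ i, Z * B i = B i * Zᵀ) ∧ IsNilpotent Z} <
      Submodule.span F
        {Z : Matrix (Fin n) (Fin n) F | ∀ i, Z * B i = B i * Zᵀ} := by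
  have : Nonempty (Fin n) := ⟨⟨0, hn⟩⟩
  refine lt_of_le_not_ge (Submodule.span_mono fun Z hZ => hZ.1) fun hle => ?_
  let K := AlgebraicClosure F
  let φ := algebraMap F K
  have h2K : (2 : K) ≠ 0 := by
    rw [← map_ofNat φ 2]
    exact (map_ne_zero φ).mpr h2
  have hεK : IsUnit (φ ε) := by
    rcases hε with rfl | rfl <;> simp
  have hBK : ∀ i, ((B i).map φ)ᵀ = φ ε • (B i).map φ := fun i => by
    rw [← transpose_map, hB, Matrix.map_smul' _ _ _ (map_mul φ)]
  obtain ⟨Z, hZ, hZ'⟩ := exists_selfAdjoint_notMem_span_isNilpotent h2K hεK hBK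
  have hspan : ∀ X ∈ Submodule.span F {Z : Matrix (Fin n) (Fin n) F |
      (∀ i, Z * B i = B i * Zᵀ) ∧ IsNilpotent Z},
      X.map φ ∈ Submodule.span K {Z : Matrix (Fin n) (Fin n) K |
        (∀ i, Z * (B i).map φ = (B i).map φ * Zᵀ) ∧ IsNilpotent Z} := by
    intro X hX
    induction hX using Submodule.span_induction with
    | mem X hX =>
      refine Submodule.subset_span ⟨fun i => ?_, hX.2.map φ.mapMatrix⟩
      rw [← Matrix.map_mul, hX.1 i, Matrix.map_mul, transpose_map]
    | zero => simp
    | add X Y _ _ hX hY =>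
      rw [Matrix.map_add φ (map_add φ)]
      exact add_mem hX hY
    | smul c X _ hX =>
      rw [Matrix.map_smul' _ _ _ (map_mul φ)]
      exact Submodule.smul_mem _ _ hX
  refine hZ' (Submodule.span_le.mpr ?_ (mem_span_range_map_map (F := F) Z))
  rintro _ ⟨f, rfl⟩
  refine hspan _ (hle (Submodule.subset_span fun i => ?_))
  rw [← mul_map_algebraMap_map, hZ i, map_algebraMap_mul_map, transpose_map]
end
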